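/- If for some term i_r of the sequence i, the configuration conf(i) contains b_r + 1 beads stacked consecutively on the runner i_r above position r, where b_r is the r-antigravity bound, then 1_i = 0 in R_ν^Λ (type A_∞). -/

import Mathlib

namespace KLRPaper


/-- The sequence obtained from `i` by swapping the entries in positions `r` and `r+1`
(0-indexed); identity if `r+1` is out of range. -/
def swapSeq {I : Type} {m : ℕ} (r : ℕ) (i : Fin m → I) : Fin m → I :=
  fun k =>
    if h : r + 1 < m then
      i (Equiv.swap (⟨r, Nat.lt_of_succ_lt h⟩ : Fin m) (⟨r + 1, h⟩ : Fin m) k)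
    else i k

/-- The Khovanov–Lauda–Rouquier algebra of a simply-laced quiver with vertex set `I`
and adjacency relation `adj`, on `m` strands, presented by its generators
(idempotents `e i`, dots `x r i`, crossings `δ r i`) and the KLR relations. -/
structure KLR (I : Type) [DecidableEq I] (adj : I → I → Prop) (m : ℕ)
    (A : Type) [Ring A] where
  e : (Fin m → I) → A
  x : Fin m → (Fin m → I) → A
  δ : ℕ → (Fin m → I) → A
  e_mul_e : ∀ i j, e i * e j = if i = j then e i else 0
  e_mul_x : ∀ r i, e i * x r i = x r i
  x_mul_e : ∀ r i, x r i * e i = x r i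
  x_mul_x : ∀ r s i, x r i * x s i = x s i * x r i
  e_mul_δ : ∀ (r : ℕ) (i : Fin m → I), e (swapSeq r i) * δ r i = δ r i
  δ_mul_e : ∀ (r : ℕ) (i : Fin m → I), δ r i * e i = δ r i
  δδ_same : ∀ (r : ℕ) (h : r + 1 < m) (i : Fin m → I),
    i ⟨r, Nat.lt_of_succ_lt h⟩ = i ⟨r + 1, h⟩ →
    δ r (swapSeq r i) * δ r i = 0
  δδ_orth : ∀ (r : ℕ) (h : r + 1 < m) (i : Fin m → I),
    i ⟨r, Nat.lt_of_succ_lt h⟩ ≠ i ⟨r + 1, h⟩ →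
    ¬ adj (i ⟨r, Nat.lt_of_succ_lt h⟩) (i ⟨r + 1, h⟩) →
    δ r (swapSeq r i) * δ r i = e i
  δδ_adj : ∀ (r : ℕ) (h : r + 1 < m) (i : Fin m → I),
    adj (i ⟨r, Nat.lt_of_succ_lt h⟩) (i ⟨r + 1, h⟩) →
    δ r (swapSeq r i) * δ r i = x ⟨r, Nat.lt_of_succ_lt h⟩ i + x ⟨r + 1, h⟩ i
  δx_far : ∀ (r : ℕ) (s : Fin m) (i : Fin m → I), s.val ≠ r → s.val ≠ r + 1 →
    δ r i * x s i = x s (swapSeq r i) * δ r i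
  δx_diff1 : ∀ (r : ℕ) (h : r + 1 < m) (i : Fin m → I),
    i ⟨r, Nat.lt_of_succ_lt h⟩ ≠ i ⟨r + 1, h⟩ →
    δ r i * x ⟨r, Nat.lt_of_succ_lt h⟩ i = x ⟨r + 1, h⟩ (swapSeq r i) * δ r i
  δx_diff2 : ∀ (r : ℕ) (h : r + 1 < m) (i : Fin m → I),
    i ⟨r, Nat.lt_of_succ_lt h⟩ ≠ i ⟨r + 1, h⟩ →
    δ r i * x ⟨r + 1, h⟩ i = x ⟨r, Nat.lt_of_succ_lt h⟩ (swapSeq r i) * δ r i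
  δx_same1 : ∀ (r : ℕ) (h : r + 1 < m) (i : Fin m → I),
    i ⟨r, Nat.lt_of_succ_lt h⟩ = i ⟨r + 1, h⟩ →
    δ r i * x ⟨r, Nat.lt_of_succ_lt h⟩ i - x ⟨r + 1, h⟩ (swapSeq r i) * δ r i = e i
  δx_same2 : ∀ (r : ℕ) (h : r + 1 < m) (i : Fin m → I),
    i ⟨r, Nat.lt_of_succ_lt h⟩ = i ⟨r + 1, h⟩ →
    x ⟨r, Nat.lt_of_succ_lt h⟩ (swapSeq r i) * δ r i - δ r i * x ⟨r + 1, h⟩ i = e i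
  braid_easy : ∀ (r : ℕ) (h : r + 2 < m) (i : Fin m → I),
    ¬ (i ⟨r, by omega⟩ = i ⟨r + 2, h⟩ ∧ adj (i ⟨r, by omega⟩) (i ⟨r + 1, by omega⟩)) →
    δ r (swapSeq (r + 1) (swapSeq r i)) * δ (r + 1) (swapSeq r i) * δ r i =
      δ (r + 1) (swapSeq r (swapSeq (r + 1) i)) * δ r (swapSeq (r + 1) i) * δ (r + 1) i
  braid_hard : ∀ (r : ℕ) (h : r + 2 < m) (i : Fin m → I),
    i ⟨r, by omega⟩ = i ⟨r + 2, h⟩ → adj (i ⟨r, by omega⟩) (i ⟨r + 1, by omega⟩) →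
    δ r (swapSeq (r + 1) (swapSeq r i)) * δ (r + 1) (swapSeq r i) * δ r i -
      δ (r + 1) (swapSeq r (swapSeq (r + 1) i)) * δ r (swapSeq (r + 1) i) * δ (r + 1) i
      = e i

/-- The cyclotomic quotient `R_ν^Λ` of the KLR algebra at the dominant weight
`Λ = Σ λ_i · i` (a finitely supported function `I →₀ ℕ`): it additionally satisfies
`x_{1,i}^{λ_{i₁}} 1_i = 0` for every sequence `i`. -/
structure CycKLR (I : Type) [DecidableEq I] (adj : I → I → Prop) (m : ℕ)
    (A : Type) [Ring A] (Λ : I →₀ ℕ) extends KLR I adj m A where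
  cyc : ∀ (h : 0 < m) (i : Fin m → I), x ⟨0, h⟩ i ^ Λ (i ⟨0, h⟩) * e i = 0



/-- Adjacency for the type `A_∞` quiver with vertex set `ℤ`. -/
def adjZ (u v : ℤ) : Prop := (u - v).natAbs = 1

/-- The heap covering relation for the bead-and-runner diagram of the sequence `l`
(type `A_∞`): bead `a` is directly below bead `b` if it was placed earlier and its
runner is at distance at most one from the runner of `b`. -/
def HeapRel (l : List ℤ) (a b : ℕ) : Prop :=
  a < b ∧ b < l.length ∧ (l.getD a 0 - l.getD b 0).natAbs ≤ 1

/-- Bead `k` is trapped below the anchored bead `r` in antigravity: there is a chain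
of beads from `k` up to `r`, each step going to a later bead on the same or an
adjacent runner. -/
def Trapped (l : List ℤ) (r k : ℕ) : Prop :=
  Relation.ReflTransGen (HeapRel l) k r

open Classical in
/-- The support of the `r`-stable antigravity configuration `a_r(l)`: the set of
runners carrying a bead trapped below the anchored bead `r`. -/
noncomputable def trappedRunners (l : List ℤ) (r : ℕ) : Finset ℤ :=
  ((Finset.range l.length).filter fun k => Trapped l r k).image fun k => l.getD k 0

/-- The `r`-antigravity bound `b_r = Σ_{j ∈ Supp(a_r(l))} λ_j`. -/
noncomputable def agBound (Λ : ℤ →₀ ℕ) (l : List ℤ) (r : ℕ) : ℕ :=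
  ∑ j ∈ trappedRunners l r, Λ j



open MvPolynomial in
/-- The ring endomorphism swapping the variables `k` and `k+1`. -/
noncomputable def sw {m : ℕ} (k : ℕ) (h : k + 1 < m) :
    MvPolynomial (Fin m) ℤ →+* MvPolynomial (Fin m) ℤ :=
  (MvPolynomial.rename (Equiv.swap (⟨k, Nat.lt_of_succ_lt h⟩ : Fin m) ⟨k + 1, h⟩)).toRingHom

lemma sw_X {m : ℕ} (k : ℕ) (h : k + 1 < m) (j : Fin m) :
    sw k h (MvPolynomial.X j) =
      MvPolynomial.X (Equiv.swap (⟨k, Nat.lt_of_succ_lt h⟩ : Fin m) ⟨k + 1, h⟩ j) := by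
  simp [sw]

lemma sw_C {m : ℕ} (k : ℕ) (h : k + 1 < m) (a : ℤ) :
    sw k h (MvPolynomial.C a : MvPolynomial (Fin m) ℤ) = MvPolynomial.C a := by
  simp [sw]

lemma sw_sw {m : ℕ} (k : ℕ) (h : k + 1 < m) (f : MvPolynomial (Fin m) ℤ) :
    sw k h (sw k h f) = f := by
  simp only [sw, AlgHom.toRingHom_eq_coe, RingHom.coe_coe, MvPolynomial.rename_rename]
  have : (Equiv.swap (⟨k, Nat.lt_of_succ_lt h⟩ : Fin m) ⟨k + 1, h⟩ : Fin m → Fin m) ∘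
      (Equiv.swap (⟨k, Nat.lt_of_succ_lt h⟩ : Fin m) ⟨k + 1, h⟩) = id := by
    funext j; simp
  rw [this]; simp

lemma swapSeq_apply {m : ℕ} (k : ℕ) (h : k + 1 < m) (q : Fin m → ℤ) (j : Fin m) :
    swapSeq k q j = q (Equiv.swap (⟨k, Nat.lt_of_succ_lt h⟩ : Fin m) ⟨k + 1, h⟩ j) := by
  simp [swapSeq, h]

lemma swapSeq_left {m : ℕ} (k : ℕ) (h : k + 1 < m) (q : Fin m → ℤ) :
    swapSeq k q ⟨k, Nat.lt_of_succ_lt h⟩ = q ⟨k + 1, h⟩ := by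
  simp [swapSeq, h]

lemma swapSeq_right {m : ℕ} (k : ℕ) (h : k + 1 < m) (q : Fin m → ℤ) :
    swapSeq k q ⟨k + 1, h⟩ = q ⟨k, Nat.lt_of_succ_lt h⟩ := by
  simp [swapSeq, h]

lemma swapSeq_other {m : ℕ} (k : ℕ) (q : Fin m → ℤ) (j : Fin m)
    (h1 : j.val ≠ k) (h2 : j.val ≠ k + 1) : swapSeq k q j = q j := by
  unfold swapSeq
  split_ifs with h
  · rw [Equiv.swap_apply_of_ne_of_ne]
    · intro hh; exact h1 (by rw [hh])
    · intro hh; exact h2 (by rw [hh])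
  · rfl

lemma swapSeq_swapSeq {m : ℕ} (k : ℕ) (q : Fin m → ℤ) :
    swapSeq k (swapSeq k q) = q := by
  funext j
  by_cases h : k + 1 < m
  · simp [swapSeq, h]
  · simp [swapSeq, h]

lemma swapSeq_same {m : ℕ} (k : ℕ) (h : k + 1 < m) (q : Fin m → ℤ)
    (e : q ⟨k, Nat.lt_of_succ_lt h⟩ = q ⟨k + 1, h⟩) : swapSeq k q = q := by
  funext j
  by_cases h1 : j.val = k
  · obtain ⟨j, hj⟩ := j
    simp only at h1; subst h1
    rw [swapSeq_left j h, e]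
  by_cases h2 : j.val = k + 1
  · obtain ⟨j, hj⟩ := j
    simp only at h2; subst h2
    rw [swapSeq_right k h, e]
  exact swapSeq_other k q j h1 h2

/-- An abstraction of the family of annihilators of the idempotents `1_q` in the
polynomial ring in the (sign-twisted) dots. -/
structure AnnSys (m : ℕ) (Λ : ℤ → ℕ) where
  I : (Fin m → ℤ) → Ideal (MvPolynomial (Fin m) ℤ)
  far : ∀ (k : ℕ) (h : k + 1 < m) (q : Fin m → ℤ) (f : MvPolynomial (Fin m) ℤ),
    2 ≤ (q ⟨k, Nat.lt_of_succ_lt h⟩ - q ⟨k + 1, h⟩).natAbs →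
    f ∈ I (swapSeq k q) → sw k h f ∈ I q
  adj : ∀ (k : ℕ) (h : k + 1 < m) (q : Fin m → ℤ) (f : MvPolynomial (Fin m) ℤ),
    (q ⟨k, Nat.lt_of_succ_lt h⟩ - q ⟨k + 1, h⟩).natAbs = 1 →
    f ∈ I (swapSeq k q) →
    (MvPolynomial.X ⟨k, Nat.lt_of_succ_lt h⟩ - MvPolynomial.X ⟨k + 1, h⟩) * sw k h f ∈ I q
  same : ∀ (k : ℕ) (h : k + 1 < m) (q : Fin m → ℤ) (f g : MvPolynomial (Fin m) ℤ),
    q ⟨k, Nat.lt_of_succ_lt h⟩ = q ⟨k + 1, h⟩ → f ∈ I q →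
    f - sw k h f =
      (MvPolynomial.X ⟨k, Nat.lt_of_succ_lt h⟩ - MvPolynomial.X ⟨k + 1, h⟩) * g →
    g ∈ I q
  braid : ∀ (k : ℕ) (h : k + 2 < m) (q : Fin m → ℤ) (f : MvPolynomial (Fin m) ℤ),
    q ⟨k, by omega⟩ = q ⟨k + 2, h⟩ → (q ⟨k, by omega⟩ - q ⟨k + 1, by omega⟩).natAbs = 1 →
    sw k (by omega) f ∈ I (swapSeq k q) →
    sw (k + 1) (by omega) f ∈ I (swapSeq (k + 1) q) → f ∈ I q
  cyc : ∀ (h : 0 < m) (q : Fin m → ℤ), MvPolynomial.X ⟨0, h⟩ ^ Λ (q ⟨0, h⟩) ∈ I q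

/-- Sign attached to a runner. -/
def sg (a : ℤ) : ℤ := if Even a then 1 else -1

lemma sg_mul_self (a : ℤ) : sg a * sg a = 1 := by
  unfold sg; split_ifs <;> rfl

lemma sg_adj (a b : ℤ) (h : (a - b).natAbs = 1) : sg b = - sg a := by
  have h' : a = b + 1 ∨ a = b - 1 := by omega
  unfold sg
  rcases h' with rfl | rfl <;> by_cases hb : Even b <;>
    simp [hb, parity_simps, ← Int.not_even_iff_odd]

section ev

variable {m : ℕ} {A : Type} [Ring A] {Λ : ℤ →₀ ℕ}

/-- A ring homomorphism out of a polynomial ring given by commuting elements. -/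
theorem exists_ev {σ : Type} (y : σ → A) (hy : ∀ r s, y r * y s = y s * y r) :
    ∃ φ : MvPolynomial σ ℤ →+* A, ∀ r, φ (MvPolynomial.X r) = y r := by
  have hcomm : IsMulCommutative (Subring.closure (Set.range y)) :=
    Subring.isMulCommutative_closure (by
      rintro _ ⟨r, rfl⟩ _ ⟨s, rfl⟩; exact hy r s)
  let : CommRing (Subring.closure (Set.range y)) :=
    { (inferInstance : Ring (Subring.closure (Set.range y))) with
      mul_comm := fun a b => hcomm.is_comm.comm a b }
  let g : σ → Subring.closure (Set.range y) :=
    fun r => ⟨y r, Subring.subset_closure ⟨r, rfl⟩⟩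
  refine ⟨(Subring.subtype (Subring.closure (Set.range y))).comp
    (MvPolynomial.eval₂Hom (Int.castRingHom _) g), fun r => ?_⟩
  simp [g]

lemma exists_evK (K : CycKLR ℤ adjZ m A Λ) (q : Fin m → ℤ) :
    ∃ φ : MvPolynomial (Fin m) ℤ →+* A,
      ∀ r, φ (MvPolynomial.X r) = (sg (q r) : A) * K.x r q := by
  apply exists_ev
  intro r s
  have h1 := Int.cast_commute (sg (q s)) (K.x r q)
  have h2 := Int.cast_commute (sg (q r)) (K.x s q)
  have h3 := Int.cast_commute (sg (q r)) ((sg (q s) : ℤ) : A)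
  calc (sg (q r) : A) * K.x r q * ((sg (q s) : A) * K.x s q)
      = (sg (q r) : A) * (K.x r q * (sg (q s) : A)) * K.x s q := by noncomm_ring
    _ = ((sg (q r) : A) * (sg (q s) : A)) * (K.x r q * K.x s q) := by
        rw [← h1.eq]; noncomm_ring
    _ = ((sg (q s) : A) * (sg (q r) : A)) * (K.x s q * K.x r q) := by
        rw [h3.eq, K.x_mul_x]
    _ = (sg (q s) : A) * ((sg (q r) : A) * K.x s q) * K.x r q := by noncomm_ring
    _ = _ := by rw [h2.eq]; noncomm_ring

/-- Evaluation of polynomials at the sign-twisted dots. -/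
noncomputable def ev (K : CycKLR ℤ adjZ m A Λ) (q : Fin m → ℤ) :
    MvPolynomial (Fin m) ℤ →+* A := (exists_evK K q).choose

lemma ev_X (K : CycKLR ℤ adjZ m A Λ) (q : Fin m → ℤ) (r : Fin m) :
    ev K q (MvPolynomial.X r) = (sg (q r) : A) * K.x r q := (exists_evK K q).choose_spec r

lemma ev_C (K : CycKLR ℤ adjZ m A Λ) (q : Fin m → ℤ) (a : ℤ) :
    ev K q (MvPolynomial.C a) = (a : A) := by
  have : (MvPolynomial.C a : MvPolynomial (Fin m) ℤ) = (a : MvPolynomial (Fin m) ℤ) := by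
    simp
  rw [this, map_intCast]

lemma ev_comm (K : CycKLR ℤ adjZ m A Λ) (q : Fin m → ℤ) (f g) :
    ev K q f * ev K q g = ev K q g * ev K q f := by
  rw [← map_mul, ← map_mul, mul_comm]

lemma x_eq (K : CycKLR ℤ adjZ m A Λ) (q : Fin m → ℤ) (r : Fin m) :
    K.x r q = (sg (q r) : A) * ev K q (MvPolynomial.X r) := by
  rw [ev_X, ← mul_assoc, ← Int.cast_mul, sg_mul_self]; simp

lemma ev_e (K : CycKLR ℤ adjZ m A Λ) (q : Fin m → ℤ) (f) :
    ev K q f * K.e q = K.e q * ev K q f := by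
  induction f using MvPolynomial.induction_on with
  | C a => rw [ev_C]; exact Int.cast_commute _ _
  | add f g hf hg => rw [map_add, add_mul, mul_add, hf, hg]
  | mul_X f j hf =>
    have : ev K q (MvPolynomial.X j) * K.e q = K.e q * ev K q (MvPolynomial.X j) := by
      rw [ev_X, mul_assoc, K.x_mul_e, ← mul_assoc, ← (Int.cast_commute _ (K.e q)).eq,
        mul_assoc, K.e_mul_x]
    rw [map_mul, mul_assoc, this, ← mul_assoc, hf, mul_assoc]

lemma δ_ev (K : CycKLR ℤ adjZ m A Λ) (k : ℕ) (h : k + 1 < m) (q : Fin m → ℤ)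
    (hne : q ⟨k, Nat.lt_of_succ_lt h⟩ ≠ q ⟨k + 1, h⟩) (f) :
    K.δ k q * ev K q f = ev K (swapSeq k q) (sw k h f) * K.δ k q := by
  induction f using MvPolynomial.induction_on with
  | C a => rw [sw_C, ev_C, ev_C]; exact (Int.cast_commute _ _).symm
  | add f g hf hg => rw [map_add, map_add, map_add, add_mul, mul_add, hf, hg]
  | mul_X f j hf =>
    have key : K.δ k q * K.x j q = K.x (Equiv.swap (⟨k, Nat.lt_of_succ_lt h⟩ : Fin m) ⟨k + 1, h⟩ j)
        (swapSeq k q) * K.δ k q := by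
      by_cases h1 : j = ⟨k, Nat.lt_of_succ_lt h⟩
      · subst h1; rw [Equiv.swap_apply_left]; exact K.δx_diff1 k h q hne
      by_cases h2 : j = ⟨k + 1, h⟩
      · subst h2; rw [Equiv.swap_apply_right]; exact K.δx_diff2 k h q hne
      rw [Equiv.swap_apply_of_ne_of_ne h1 h2]
      exact K.δx_far k j q (fun hh => h1 (Fin.ext hh)) (fun hh => h2 (Fin.ext hh))
    have : K.δ k q * ev K q (MvPolynomial.X j) =
        ev K (swapSeq k q) (sw k h (MvPolynomial.X j)) * K.δ k q := by
      rw [sw_X, ev_X, ev_X, swapSeq_apply k h, Equiv.swap_apply_self, ← mul_assoc,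
        ← (Int.cast_commute _ (K.δ k q)).eq, mul_assoc, key, mul_assoc]
    rw [map_mul, map_mul, map_mul, ← mul_assoc, hf, mul_assoc, this, ← mul_assoc]

lemma δ_ev_same (K : CycKLR ℤ adjZ m A Λ) (k : ℕ) (h : k + 1 < m) (q : Fin m → ℤ)
    (he : q ⟨k, Nat.lt_of_succ_lt h⟩ = q ⟨k + 1, h⟩) (f) :
    ∃ g, f - sw k h f =
      (MvPolynomial.X ⟨k, Nat.lt_of_succ_lt h⟩ - MvPolynomial.X ⟨k + 1, h⟩) * g ∧
      K.δ k q * ev K q f = ev K q (sw k h f) * K.δ k q +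
        ev K q (MvPolynomial.C (sg (q ⟨k, Nat.lt_of_succ_lt h⟩)) * g) * K.e q := by
  have hs := swapSeq_same k h q he
  have h1 := K.δx_same1 k h q he
  have h2 := K.δx_same2 k h q he
  rw [hs] at h1 h2
  induction f using MvPolynomial.induction_on with
  | C a =>
    refine ⟨0, by rw [sw_C]; simp, ?_⟩
    rw [sw_C, ev_C, mul_zero, map_zero, zero_mul, add_zero]; exact (Int.cast_commute _ _).symm
  | add f g hf hg =>
    obtain ⟨f', hf1, hf2⟩ := hf
    obtain ⟨g', hg1, hg2⟩ := hg
    refine ⟨f' + g', ?_, ?_⟩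
    · rw [map_add, mul_add, ← hf1, ← hg1]; ring
    · simp only [map_add, mul_add, add_mul, hf2, hg2]; abel
  | mul_X f j hf =>
    obtain ⟨f', hf1, hf2⟩ := hf
    have key : ∃ c : ℤ, MvPolynomial.X j - sw k h (MvPolynomial.X j) =
        (MvPolynomial.X ⟨k, Nat.lt_of_succ_lt h⟩ - MvPolynomial.X ⟨k + 1, h⟩) *
          MvPolynomial.C c ∧
        K.δ k q * ev K q (MvPolynomial.X j) =
          ev K q (sw k h (MvPolynomial.X j)) * K.δ k q +
            (c : A) * (sg (q ⟨k, Nat.lt_of_succ_lt h⟩) : A) * K.e q := by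
      rw [sw_X]
      by_cases e1 : j = ⟨k, Nat.lt_of_succ_lt h⟩
      · subst e1
        refine ⟨1, by simp, ?_⟩
        rw [Equiv.swap_apply_left, ev_X, ev_X, ← he, ← mul_assoc,
          ← (Int.cast_commute _ (K.δ k q)).eq, mul_assoc, ← h1]
        push_cast
        noncomm_ring
      by_cases e2 : j = ⟨k + 1, h⟩
      · subst e2
        refine ⟨-1, by simp, ?_⟩
        rw [Equiv.swap_apply_right, ev_X, ev_X, ← he, ← mul_assoc,
          ← (Int.cast_commute _ (K.δ k q)).eq, mul_assoc, ← h2]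
        push_cast
        noncomm_ring
      · refine ⟨0, ?_, ?_⟩
        · rw [Equiv.swap_apply_of_ne_of_ne e1 e2]; simp
        · have := K.δx_far k j q (fun hh => e1 (Fin.ext hh)) (fun hh => e2 (Fin.ext hh))
          rw [hs] at this
          rw [Equiv.swap_apply_of_ne_of_ne e1 e2, ev_X, ← mul_assoc,
            ← (Int.cast_commute _ (K.δ k q)).eq, mul_assoc, this]
          push_cast; noncomm_ring
    obtain ⟨c, hc1, hc2⟩ := key
    refine ⟨f' * MvPolynomial.X j + sw k h f * MvPolynomial.C c, ?_, ?_⟩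
    · rw [map_mul]
      linear_combination MvPolynomial.X j * hf1 + sw k h f * hc1
    · have e3 : ((c : A) * (sg (q ⟨k, Nat.lt_of_succ_lt h⟩) : A)) =
          ev K q (MvPolynomial.C c * MvPolynomial.C (sg (q ⟨k, Nat.lt_of_succ_lt h⟩))) := by
        rw [map_mul, ev_C, ev_C]
      rw [e3] at hc2
      rw [map_mul, ← mul_assoc, hf2, add_mul, mul_assoc, hc2, mul_assoc _ (K.e q), ← ev_e,
        mul_add, ← mul_assoc, ← mul_assoc, ← mul_assoc, ← (ev K q).map_mul,
        ← (ev K q).map_mul, ← (ev K q).map_mul, map_mul (sw k h),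
        add_assoc, ← add_mul, ← (ev K q).map_add]
      congr 3
      ring

/-- The annihilator of `1_q`. -/
noncomputable def annI (K : CycKLR ℤ adjZ m A Λ) (q : Fin m → ℤ) :
    Ideal (MvPolynomial (Fin m) ℤ) where
  carrier := {f | ev K q f * K.e q = 0}
  add_mem' := by
    intro a b ha hb
    simp only [Set.mem_ofPred_eq] at *
    rw [map_add, add_mul, ha, hb, add_zero]
  zero_mem' := by simp
  smul_mem' := by
    intro c a ha
    simp only [Set.mem_ofPred_eq, smul_eq_mul] at *
    rw [map_mul, mul_assoc, ha, mul_zero]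

lemma mem_annI (K : CycKLR ℤ adjZ m A Λ) (q : Fin m → ℤ) (f) :
    f ∈ annI K q ↔ ev K q f * K.e q = 0 := Iff.rfl

lemma ev_δ_zero (K : CycKLR ℤ adjZ m A Λ) (k : ℕ) (h : k + 1 < m) (q : Fin m → ℤ)
    (hne : q ⟨k, Nat.lt_of_succ_lt h⟩ ≠ q ⟨k + 1, h⟩) (f)
    (hf : sw k h f ∈ annI K (swapSeq k q)) :
    ev K q f * K.δ k (swapSeq k q) = 0 := by
  have := δ_ev K k h (swapSeq k q) (by rw [swapSeq_left, swapSeq_right]; exact hne.symm)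
    (sw k h f)
  rw [swapSeq_swapSeq, sw_sw] at this
  rw [← this, ← K.δ_mul_e, mul_assoc, ← ev_e, (mem_annI _ _ _).1 hf, mul_zero]

/-- The annihilator system of a cyclotomic KLR algebra. -/
noncomputable def annSys (K : CycKLR ℤ adjZ m A Λ) : AnnSys m Λ where
  I := annI K
  far := by
    intro k h q f hd hf
    have hne : q ⟨k, Nat.lt_of_succ_lt h⟩ ≠ q ⟨k + 1, h⟩ := by
      intro hh; rw [hh] at hd; simp at hd
    have h0 := ev_δ_zero K k h q hne (sw k h f) (by rwa [sw_sw])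
    rw [mem_annI, ← K.δδ_orth k h q hne (by unfold adjZ; omega), ← mul_assoc, h0, zero_mul]
  adj := by
    intro k h q f hd hf
    have hne : q ⟨k, Nat.lt_of_succ_lt h⟩ ≠ q ⟨k + 1, h⟩ := by
      intro hh; rw [hh] at hd; simp at hd
    have h0 := ev_δ_zero K k h q hne (sw k h f) (by rwa [sw_sw])
    have h1 := K.δδ_adj k h q hd
    have h2 : ev K q (sw k h f) *
        (K.x ⟨k, Nat.lt_of_succ_lt h⟩ q + K.x ⟨k + 1, h⟩ q) = 0 := by
      rw [← h1, ← mul_assoc, h0, zero_mul]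
    rw [mem_annI, mul_comm, map_mul, map_sub, ev_X, ev_X, sg_adj _ _ hd]
    have h3 := Int.cast_commute (sg (q ⟨k, Nat.lt_of_succ_lt h⟩)) (ev K q (sw k h f))
    have : ((sg (q ⟨k, Nat.lt_of_succ_lt h⟩) : ℤ) : A) * K.x ⟨k, Nat.lt_of_succ_lt h⟩ q -
        ((-sg (q ⟨k, Nat.lt_of_succ_lt h⟩) : ℤ) : A) * K.x ⟨k + 1, h⟩ q =
        ((sg (q ⟨k, Nat.lt_of_succ_lt h⟩) : ℤ) : A) *
          (K.x ⟨k, Nat.lt_of_succ_lt h⟩ q + K.x ⟨k + 1, h⟩ q) := by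
      push_cast; noncomm_ring
    rw [this, ← mul_assoc, ← h3.eq, mul_assoc _ (ev K q (sw k h f)), h2, mul_zero, zero_mul]
  same := by
    intro k h q f g he hf hg
    obtain ⟨g', hg1, hg2⟩ := δ_ev_same K k h q he f
    have hX : (MvPolynomial.X ⟨k, Nat.lt_of_succ_lt h⟩ - MvPolynomial.X ⟨k + 1, h⟩ :
        MvPolynomial (Fin m) ℤ) ≠ 0 := by
      rw [sub_ne_zero]
      intro hh
      have := MvPolynomial.X_injective hh
      simp at this
    have hgg : g = g' := mul_left_cancel₀ hX (by rw [← hg, hg1])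
    subst hgg
    have hs := swapSeq_same k h q he
    have h1 := K.δx_same1 k h q he
    have hdd := K.δδ_same k h q he
    have hed := K.e_mul_δ k q
    rw [hs] at h1 hdd hed
    rw [mem_annI] at hf
    set g₂ := MvPolynomial.C (sg (q ⟨k, Nat.lt_of_succ_lt h⟩)) * g with hg₂
    have h0 : ev K q g₂ * K.δ k q = 0 := by
      have : K.δ k q * (ev K q f * K.e q) * K.δ k q = 0 := by rw [hf]; simp
      rw [mul_assoc, mul_assoc, hed, ← mul_assoc, hg2, add_mul, mul_assoc, hdd, mul_assoc,
        hed] at this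
      simpa using this
    have h2 : g₂ ∈ annI K q := by
      rw [mem_annI, ← h1, mul_sub, ← mul_assoc, h0, x_eq K q ⟨k + 1, h⟩, ← mul_assoc,
        ← mul_assoc]
      have : ev K q g₂ * ((sg (q ⟨k + 1, h⟩) : ℤ) : A) * ev K q (MvPolynomial.X ⟨k + 1, h⟩)
          = ((sg (q ⟨k + 1, h⟩) : ℤ) : A) * ev K q (MvPolynomial.X ⟨k + 1, h⟩) *
            ev K q g₂ := by
        rw [← ev_C K q, ← map_mul, ← map_mul, ← map_mul, ← map_mul]
        congr 1; ring
      rw [this, mul_assoc, h0]; simp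
    have h3 : g = MvPolynomial.C (sg (q ⟨k, Nat.lt_of_succ_lt h⟩)) * g₂ := by
      rw [hg₂, ← mul_assoc, ← map_mul, sg_mul_self]; simp
    rw [h3]
    exact Ideal.mul_mem_left _ _ h2
  braid := by
    intro k h q f he hd h1 h2
    have hne : q ⟨k, by omega⟩ ≠ q ⟨k + 1, by omega⟩ := by
      intro hh; rw [hh] at hd; simp at hd
    have e1 : swapSeq (k + 1) (swapSeq k q) = swapSeq k q := by
      apply swapSeq_same _ h
      rw [swapSeq_right k (by omega), swapSeq_other _ _ _ (by simp; try omega) (by simp; try omega)]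
      exact he
    have e2 : swapSeq k (swapSeq (k + 1) q) = swapSeq (k + 1) q := by
      apply swapSeq_same _ (by omega)
      rw [swapSeq_left (k + 1) (by omega), swapSeq_other _ _ _ (by simp; try omega) (by simp; try omega)]
      exact he
    have := K.braid_hard k h q he hd
    rw [e1, e2] at this
    have h3 := ev_δ_zero K k (by omega) q hne f h1
    have h4 := ev_δ_zero K (k + 1) (by omega) q (by
      intro hh; apply hne; rw [hh]; exact he) f h2
    rw [mem_annI, ← this, mul_sub, ← mul_assoc, ← mul_assoc, ← mul_assoc, ← mul_assoc,
      h3, h4]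
    simp
  cyc := by
    intro h q
    have h1 := K.cyc h q
    have : (ev K q (MvPolynomial.X ⟨0, h⟩)) = ((sg (q ⟨0, h⟩) : ℤ) : A) * K.x ⟨0, h⟩ q :=
      ev_X K q _
    rw [mem_annI, map_pow, this, (Int.cast_commute _ _).mul_pow, mul_assoc, h1, mul_zero]

end ev


/-- The descending list `[c+k, ..., c+1, c]`. -/
def desc (c : ℤ) : ℕ → List ℤ
  | 0 => [c]
  | k + 1 => (c + (k + 1 : ℕ)) :: desc c k

lemma desc_mem (c : ℤ) (k : ℕ) : ∀ a ∈ desc c k, c ≤ a ∧ a ≤ c + k := by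
  induction k with
  | zero => intro a ha; simp [desc] at ha; subst ha; simp
  | succ k ih =>
    intro a ha
    simp only [desc, List.mem_cons] at ha
    rcases ha with rfl | ha
    · constructor <;> push_cast <;> omega
    · have := ih a ha; push_cast; omega

lemma desc_split (c : ℤ) (k j : ℕ) (h : j < k) :
    ∃ s, desc c k = s ++ desc c j ∧ ∀ a ∈ s, c + j + 1 ≤ a ∧ a ≤ c + k := by
  induction k with
  | zero => omega
  | succ k ih =>
    rcases Nat.lt_or_ge j k with h' | h'
    · obtain ⟨s, hs, hs'⟩ := ih h'
      refine ⟨(c + (k + 1 : ℕ)) :: s, by simp [desc, hs], ?_⟩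
      intro a ha
      simp only [List.mem_cons] at ha
      rcases ha with rfl | ha
      · push_cast; omega
      · have := hs' a ha; push_cast; omega
    · have : j = k := by omega
      subst this
      refine ⟨[c + (j + 1 : ℕ)], by simp [desc], ?_⟩
      intro a ha
      simp only [List.mem_cons, List.not_mem_nil, or_false] at ha
      subst ha; push_cast; omega

section words

variable {G : List ℤ → Prop} {c : ℤ}

lemma G_push
    (R1 : ∀ u a b v, 2 ≤ (a - b).natAbs → G (u ++ b :: a :: v) → G (u ++ a :: b :: v))
    (a : ℤ) (s : List ℤ) : ∀ u v, (∀ b ∈ s, 2 ≤ (a - b).natAbs) →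
    G (u ++ s ++ a :: v) → G (u ++ a :: (s ++ v)) := by
  induction s with
  | nil => intro u v _ h; simpa using h
  | cons b s ih =>
    intro u v hs h
    have := R1 u a b (s ++ v) (hs b (by simp)) ?_
    · simpa using this
    · have := ih (u ++ [b]) v (fun b' hb' => hs b' (by simp [hb'])) (by simpa using h)
      simpa using this

lemma G_push_end
    (R1 : ∀ u a b v, 2 ≤ (a - b).natAbs → G (u ++ b :: a :: v) → G (u ++ a :: b :: v))
    (B1 : ∀ u a, a ≠ c → G (u ++ [a]))
    (a : ℤ) (s : List ℤ) (u) (hac : a ≠ c)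
    (hs : ∀ b ∈ s, 2 ≤ (a - b).natAbs) : G (u ++ a :: s) := by
  have := G_push R1 a s u [] hs (B1 _ _ hac)
  simpa using this

lemma G_stack
    (R1 : ∀ u a b v, 2 ≤ (a - b).natAbs → G (u ++ b :: a :: v) → G (u ++ a :: b :: v))
    (R3 : ∀ u i j v, (i - j).natAbs = 1 → G (u ++ i :: j :: i :: v) →
      G (u ++ i :: i :: j :: v))
    (B1 : ∀ u a, a ≠ c → G (u ++ [a]))
    (B2 : ∀ u, G (u ++ [c, c]))
    (k : ℕ) (u) : G (u ++ (c + k) :: desc c k) := by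
  cases k with
  | zero => simpa [desc] using B2 u
  | succ k =>
    cases k with
    | zero =>
      simp only [desc]
      apply R3
      · push_cast; omega
      · have := B1 (u ++ [c + (0 + 1 : ℕ), c]) (c + (0 + 1 : ℕ)) (by push_cast; omega)
        simpa using this
    | succ k =>
      simp only [desc]
      apply R3
      · push_cast; omega
      · have := G_push_end R1 B1 (c + (k + 1 + 1 : ℕ)) (desc c k)
          (u ++ [c + (k + 1 + 1 : ℕ), c + (k + 1 : ℕ)]) (by push_cast; omega)
          (fun b hb => by have := desc_mem c k b hb; push_cast; omega)
        simpa using this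

lemma G_desc
    (R1 : ∀ u a b v, 2 ≤ (a - b).natAbs → G (u ++ b :: a :: v) → G (u ++ a :: b :: v))
    (R2 : ∀ u i j v, (i - j).natAbs = 1 → G (u ++ i :: i :: j :: v) →
      G (u ++ j :: i :: i :: v) → G (u ++ i :: j :: i :: v))
    (R3 : ∀ u i j v, (i - j).natAbs = 1 → G (u ++ i :: j :: i :: v) →
      G (u ++ i :: i :: j :: v))
    (B1 : ∀ u a, a ≠ c → G (u ++ [a]))
    (B2 : ∀ u, G (u ++ [c, c]))
    (B2' : ∀ u, G (u ++ [c - 1, c]))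
    (B3 : ∀ k, G (desc c k))
    (u : List ℤ) : ∀ k, G (u ++ desc c k) := by
  induction u using List.reverseRecOn with
  | nil => intro k; simpa using B3 k
  | append_singleton u d ih =>
    intro k
    rw [List.append_assoc, List.singleton_append]
    by_cases h1 : d = c + (k + 1 : ℕ)
    · subst h1; exact ih (k + 1)
    by_cases h2 : d = c + k
    · subst h2; exact G_stack R1 R3 B1 B2 k u
    by_cases h3 : d = c - 1
    · subst h3
      cases k with
      | zero => exact B2' u
      | succ k =>
        obtain ⟨s, hs, hs'⟩ := desc_split c (k + 1) 0 (by omega)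
        rw [hs]
        apply G_push R1
        · intro b hb; have := hs' b hb; omega
        · exact B2' _
    by_cases h4 : c ≤ d ∧ d < c + k
    · obtain ⟨j, hj⟩ : ∃ j : ℕ, d = c + j := ⟨(d - c).toNat, by omega⟩
      subst hj
      have hjk : j < k := by omega
      -- the part `[c+k, ..., c+j+2]`
      have : ∃ s, desc c k = s ++ desc c (j + 1) ∧
          ∀ a ∈ s, c + (j + 1 : ℕ) + 1 ≤ a ∧ a ≤ c + k := by
        rcases Nat.lt_or_ge (j + 1) k with h | h
        · exact desc_split c k (j + 1) h
        · have : k = j + 1 := by omega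
          subst this
          exact ⟨[], by simp, by simp⟩
      obtain ⟨s, hs, hs'⟩ := this
      rw [hs]
      apply G_push R1
      · intro b hb; have := hs' b hb; push_cast at this; omega
      have key2 : G (u ++ s ++ (c + (j + 1 : ℕ)) :: (c + j) :: desc c j) := by
        have := G_stack R1 R3 B1 B2 j (u ++ s ++ [c + (j + 1 : ℕ)])
        simpa using this
      cases j with
      | zero =>
        simp only [desc] at key2 ⊢
        have := R2 (u ++ s) (c + (0 : ℕ)) (c + (0 + 1 : ℕ)) [] (by push_cast; omega) ?_ ?_
        · simpa using this
        · have := B1 (u ++ s ++ [c + (0 : ℕ), c + (0 : ℕ)]) (c + (0 + 1 : ℕ))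
            (by push_cast; omega)
          simpa using this
        · simpa using key2
      | succ j =>
        simp only [desc] at key2 ⊢
        apply R2
        · push_cast; omega
        · have := G_push_end R1 B1 (c + (j + 1 + 1 : ℕ)) (desc c j)
            (u ++ s ++ [c + (j + 1 : ℕ), c + (j + 1 : ℕ)]) (by push_cast; omega)
            (fun b hb => by have := desc_mem c j b hb; push_cast; omega)
          simpa using this
        · exact key2
    · apply G_push_end R1 B1
      · omega
      · intro b hb
        have := desc_mem c k b hb
        push_cast at h1
        omega

theorem G_all
    (R1 : ∀ u a b v, 2 ≤ (a - b).natAbs → G (u ++ b :: a :: v) → G (u ++ a :: b :: v))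
    (R2 : ∀ u i j v, (i - j).natAbs = 1 → G (u ++ i :: i :: j :: v) →
      G (u ++ j :: i :: i :: v) → G (u ++ i :: j :: i :: v))
    (R3 : ∀ u i j v, (i - j).natAbs = 1 → G (u ++ i :: j :: i :: v) →
      G (u ++ i :: i :: j :: v))
    (B0 : G [])
    (B1 : ∀ u a, a ≠ c → G (u ++ [a]))
    (B2 : ∀ u, G (u ++ [c, c]))
    (B2' : ∀ u, G (u ++ [c - 1, c]))
    (B3 : ∀ k, G (desc c k))
    (w : List ℤ) : G w := by
  induction w using List.reverseRecOn with
  | nil => exact B0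
  | append_singleton u a _ =>
    by_cases h : a = c
    · subst h
      exact G_desc R1 R2 R3 B1 B2 B2' B3 u 0
    · exact B1 u a h

end words

/-- Divisibility of polynomials modulo an ideal of the coefficient ring. -/
def DivMod {R : Type} [CommRing R] (I : Ideal R) (A B : Polynomial R) : Prop :=
  A.map (Ideal.Quotient.mk I) ∣ B.map (Ideal.Quotient.mk I)

section divmod
open Polynomial
variable {R : Type} [CommRing R] {I : Ideal R} {A B : R[X]}

lemma divMod_iff (hA : A.Monic) : DivMod I A B ↔ ∀ i, (B %ₘ A).coeff i ∈ I := by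
  unfold DivMod
  rw [← modByMonic_eq_zero_iff_dvd (hA.map _), ← map_modByMonic _ hA, Polynomial.ext_iff]
  simp [coeff_map, Ideal.Quotient.eq_zero_iff_mem]

lemma divMod_map_eq (hA : A.Monic) (h : DivMod I A B) :
    B.map (Ideal.Quotient.mk I) =
      A.map (Ideal.Quotient.mk I) * (B /ₘ A).map (Ideal.Quotient.mk I) := by
  have h1 := (modByMonic_eq_zero_iff_dvd (hA.map (Ideal.Quotient.mk I))).2 h
  have h2 := modByMonic_add_div (B.map (Ideal.Quotient.mk I)) (A.map (Ideal.Quotient.mk I))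
  rw [h1, zero_add, ← map_divByMonic _ hA] at h2
  exact h2.symm

lemma divMod_left {y : R} (h : DivMod I (A * (X - C y)) B) : DivMod I A B := by
  unfold DivMod at *
  rw [Polynomial.map_mul] at h
  exact dvd_trans (dvd_mul_right _ _) h

lemma divMod_eval (hA : A.Monic) {y : R} (h : DivMod I (A * (X - C y)) B) :
    (B /ₘ A).eval y ∈ I := by
  have h1 := divMod_map_eq hA (divMod_left h)
  obtain ⟨G, hG⟩ := h
  rw [h1, Polynomial.map_mul, mul_assoc] at hG
  have h2 := (hA.map (Ideal.Quotient.mk I)).isRegular.left hG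
  have h3 := congrArg (Polynomial.eval (Ideal.Quotient.mk I y)) h2
  rw [Polynomial.eval_map_apply] at h3
  simp only [Polynomial.map_sub, map_X, map_C, eval_mul, eval_sub, eval_X, eval_C, sub_self,
    zero_mul] at h3
  exact Ideal.Quotient.eq_zero_iff_mem.1 h3

lemma map_eq_of_eval {H : R[X]} {y : R} (h : H.eval y ∈ I) :
    H.map (Ideal.Quotient.mk I) = (X - C y).map (Ideal.Quotient.mk I) *
      (H /ₘ (X - C y)).map (Ideal.Quotient.mk I) := by
  have h1 : DivMod I (X - C y) H := by
    rw [divMod_iff (monic_X_sub_C y), modByMonic_X_sub_C_eq_C_eval]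
    intro i
    rw [coeff_C]
    split_ifs
    · exact h
    · exact I.zero_mem
  exact divMod_map_eq (monic_X_sub_C y) h1

end divmod

section sys
open Polynomial
variable {m : ℕ} {Λ : ℤ → ℕ} (S : AnnSys m Λ)

lemma map_sw_sw (k : ℕ) (h : k + 1 < m) (f : (MvPolynomial (Fin m) ℤ)[X]) :
    (f.map (sw k h)).map (sw k h) = f := by
  ext1 i; rw [coeff_map, coeff_map, sw_sw]

lemma sw_X_left (k : ℕ) (h : k + 1 < m) :
    sw k h (MvPolynomial.X ⟨k, Nat.lt_of_succ_lt h⟩) = MvPolynomial.X ⟨k + 1, h⟩ := by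
  rw [sw_X, Equiv.swap_apply_left]

lemma sw_X_right (k : ℕ) (h : k + 1 < m) :
    sw k h (MvPolynomial.X ⟨k + 1, h⟩) = MvPolynomial.X ⟨k, Nat.lt_of_succ_lt h⟩ := by
  rw [sw_X, Equiv.swap_apply_right]

lemma sw_X_other (k : ℕ) (h : k + 1 < m) (j : Fin m) (h1 : j.val ≠ k) (h2 : j.val ≠ k + 1) :
    sw k h (MvPolynomial.X j) = MvPolynomial.X j := by
  rw [sw_X, Equiv.swap_apply_of_ne_of_ne]
  · intro hh; exact h1 (by rw [hh])
  · intro hh; exact h2 (by rw [hh])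

lemma div_same (k : ℕ) (h : k + 1 < m) (q : Fin m → ℤ)
    (he : q ⟨k, Nat.lt_of_succ_lt h⟩ = q ⟨k + 1, h⟩)
    (A B : (MvPolynomial (Fin m) ℤ)[X]) (hA : A.Monic)
    (sA : A.map (sw k h) = A) (sB : B.map (sw k h) = B)
    (hd : DivMod (S.I q) (A * (X - C (MvPolynomial.X ⟨k, Nat.lt_of_succ_lt h⟩))) B) :
    DivMod (S.I q) (A * (X - C (MvPolynomial.X ⟨k, Nat.lt_of_succ_lt h⟩)) *
      (X - C (MvPolynomial.X ⟨k + 1, h⟩))) B := by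
  have h1 := divMod_map_eq hA (divMod_left hd)
  have h2 := divMod_eval hA hd
  set y : MvPolynomial (Fin m) ℤ := MvPolynomial.X ⟨k, Nat.lt_of_succ_lt h⟩ with hy
  set y' : MvPolynomial (Fin m) ℤ := MvPolynomial.X ⟨k + 1, h⟩ with hy'
  have sH : (B /ₘ A).map (sw k h) = B /ₘ A := by
    rw [map_divByMonic _ hA, sA, sB]
  set H := B /ₘ A with hH
  set G := H /ₘ (X - C y) with hG
  have h3 : H = (X - C y) * G + C (H.eval y) := by
    have := modByMonic_add_div H (X - C y)
    rw [modByMonic_X_sub_C_eq_C_eval] at this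
    rw [hG, add_comm]; exact this.symm
  have h4 : sw k h (H.eval y) = H.eval y' := by
    rw [← Polynomial.eval_map_apply, sH, hy, sw_X_left]
  have h5 : H.eval y' = (y' - y) * G.eval y' + H.eval y := by
    conv_lhs => rw [h3]
    simp
  have h6 : G.eval y' ∈ S.I q := by
    apply S.same k h q (H.eval y) (G.eval y') he h2
    rw [h4, h5]; ring
  have h7 := map_eq_of_eval h2
  have h8 := map_eq_of_eval h6
  unfold DivMod
  rw [h1, h7, ← hG, h8, Polynomial.map_mul, Polynomial.map_mul]
  exact ⟨(G /ₘ (X - C y')).map (Ideal.Quotient.mk (S.I q)), by ring⟩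

/-- The product of `u - y_j` over the beads `j < n` on runner `c`. -/
noncomputable def Qp (c : ℤ) (n : ℕ) (q : Fin m → ℤ) : (MvPolynomial (Fin m) ℤ)[X] :=
  ∏ j ∈ Finset.univ.filter (fun j : Fin m => j.val < n ∧ q j = c), (X - C (MvPolynomial.X j))

lemma Qp_monic (c : ℤ) (n : ℕ) (q : Fin m → ℤ) : (Qp c n q).Monic :=
  monic_prod_of_monic _ _ (fun _ _ => monic_X_sub_C _)

lemma Qp_zero (c : ℤ) (q : Fin m → ℤ) : Qp c 0 q = 1 := by
  unfold Qp; simp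

lemma Qp_succ_eq (c : ℤ) (n : ℕ) (h : n < m) (q : Fin m → ℤ) (hc : q ⟨n, h⟩ = c) :
    Qp c (n + 1) q = Qp c n q * (X - C (MvPolynomial.X ⟨n, h⟩)) := by
  unfold Qp
  rw [mul_comm, ← Finset.prod_insert (s := Finset.univ.filter _) (a := (⟨n, h⟩ : Fin m))
    (f := fun j => (X - C (MvPolynomial.X j) : (MvPolynomial (Fin m) ℤ)[X])) (by simp)]
  congr 1
  ext j
  simp only [Finset.mem_filter, Finset.mem_univ, true_and, Finset.mem_insert, Fin.ext_iff]
  constructor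
  · rintro ⟨h1, h2⟩
    by_cases h3 : j.val = n
    · left; exact h3
    · right; exact ⟨by omega, h2⟩
  · rintro (h1 | ⟨h1, h2⟩)
    · refine ⟨by omega, ?_⟩
      have : j = ⟨n, h⟩ := Fin.ext h1
      rw [this, hc]
    · exact ⟨by omega, h2⟩

lemma Qp_succ_ne (c : ℤ) (n : ℕ) (h : n < m) (q : Fin m → ℤ) (hc : q ⟨n, h⟩ ≠ c) :
    Qp c (n + 1) q = Qp c n q := by
  unfold Qp
  congr 1
  ext j
  simp only [Finset.mem_filter, Finset.mem_univ, true_and]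
  constructor
  · rintro ⟨h1, h2⟩
    refine ⟨?_, h2⟩
    by_contra h3
    have : j = ⟨n, h⟩ := Fin.ext (by simp; omega)
    subst this
    exact hc h2
  · rintro ⟨h1, h2⟩
    exact ⟨by omega, h2⟩

lemma swap_val_lt (k n : ℕ) (h : k + 1 < m) (hk : k + 1 < n) (j : Fin m) :
    (Equiv.swap (⟨k, Nat.lt_of_succ_lt h⟩ : Fin m) ⟨k + 1, h⟩ j).val < n ↔ j.val < n := by
  by_cases h1 : j = ⟨k, Nat.lt_of_succ_lt h⟩
  · subst h1; rw [Equiv.swap_apply_left]; simp; omega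
  by_cases h2 : j = ⟨k + 1, h⟩
  · subst h2; rw [Equiv.swap_apply_right]; simp; omega
  rw [Equiv.swap_apply_of_ne_of_ne h1 h2]

lemma Qp_swap (c : ℤ) (n k : ℕ) (h : k + 1 < m) (hk : k + 1 < n) (q : Fin m → ℤ) :
    Qp c n (swapSeq k q) = (Qp c n q).map (sw k h) := by
  unfold Qp
  rw [Polynomial.map_prod]
  symm
  apply Finset.prod_equiv (Equiv.swap (⟨k, Nat.lt_of_succ_lt h⟩ : Fin m) ⟨k + 1, h⟩)
  · intro j
    simp only [Finset.mem_filter, Finset.mem_univ, true_and]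
    rw [swap_val_lt k n h hk, swapSeq_apply k h, Equiv.swap_apply_self]
  · intro j _
    simp only [Polynomial.map_sub, map_X, map_C, sw_X]

lemma Qp_swap_ge (c : ℤ) (n k : ℕ) (hk : n ≤ k) (q : Fin m → ℤ) :
    Qp c n (swapSeq k q) = Qp c n q := by
  unfold Qp
  congr 1
  ext j
  simp only [Finset.mem_filter, Finset.mem_univ, true_and]
  refine and_congr_right fun hj => ?_
  rw [swapSeq_other _ _ _ (by omega) (by omega)]

lemma Qp_map_ge (c : ℤ) (n k : ℕ) (h : k + 1 < m) (hk : n ≤ k) (q : Fin m → ℤ) :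
    (Qp c n q).map (sw k h) = Qp c n q := by
  unfold Qp
  rw [Polynomial.map_prod]
  apply Finset.prod_congr rfl
  intro j hj
  simp only [Finset.mem_filter, Finset.mem_univ, true_and] at hj
  simp only [Polynomial.map_sub, map_X, map_C]
  rw [sw_X_other _ _ _ (by omega) (by omega)]

/-- The key divisibility property. -/
def GoodF (c : ℤ) (N n : ℕ) (q : Fin m → ℤ) : Prop :=
  DivMod (S.I q) (Qp c n q) (X ^ N * Qp (c - 1) n q)

lemma goodF_iff (c : ℤ) (N n : ℕ) (q : Fin m → ℤ) :
    GoodF S c N n q ↔ ∀ i, ((X ^ N * Qp (c - 1) n q) %ₘ Qp c n q).coeff i ∈ S.I q :=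
  divMod_iff (Qp_monic _ _ _)

lemma goodF_swap_iff (c : ℤ) (N n k : ℕ) (h : k + 1 < m) (hk : k + 1 < n) (q : Fin m → ℤ) :
    GoodF S c N n (swapSeq k q) ↔
      ∀ i, sw k h (((X ^ N * Qp (c - 1) n q) %ₘ Qp c n q).coeff i) ∈ S.I (swapSeq k q) := by
  rw [goodF_iff]
  have : (X ^ N * Qp (c - 1) n (swapSeq k q)) %ₘ Qp c n (swapSeq k q) =
      ((X ^ N * Qp (c - 1) n q) %ₘ Qp c n q).map (sw k h) := by
    rw [map_modByMonic _ (Qp_monic _ _ _), Qp_swap _ _ _ h hk, Qp_swap _ _ _ h hk]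
    simp
  simp only [this, coeff_map]

lemma good_far (c : ℤ) (N n k : ℕ) (h : k + 1 < m) (hk : k + 1 < n) (q : Fin m → ℤ)
    (hq : 2 ≤ (q ⟨k, Nat.lt_of_succ_lt h⟩ - q ⟨k + 1, h⟩).natAbs)
    (hg : GoodF S c N n (swapSeq k q)) : GoodF S c N n q := by
  rw [goodF_swap_iff S c N n k h hk] at hg
  rw [goodF_iff]
  intro i
  have := S.far k h q _ hq (hg i)
  rwa [sw_sw] at this

lemma good_braid (c : ℤ) (N n k : ℕ) (h : k + 2 < m) (hk : k + 2 < n) (q : Fin m → ℤ)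
    (hq : q ⟨k, by omega⟩ = q ⟨k + 2, h⟩)
    (hq' : (q ⟨k, by omega⟩ - q ⟨k + 1, by omega⟩).natAbs = 1)
    (hg : GoodF S c N n (swapSeq k q)) (hg' : GoodF S c N n (swapSeq (k + 1) q)) :
    GoodF S c N n q := by
  rw [goodF_swap_iff S c N n k (by omega) (by omega)] at hg
  rw [goodF_swap_iff S c N n (k + 1) (by omega) (by omega)] at hg'
  rw [goodF_iff]
  intro i
  exact S.braid k h q _ hq hq' (hg i) (hg' i)

lemma good_stack (c : ℤ) (N n k : ℕ) (h : k + 2 < m) (hk : k + 2 < n) (q : Fin m → ℤ)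
    (hq : q ⟨k, by omega⟩ = q ⟨k + 1, by omega⟩)
    (hq' : (q ⟨k + 1, by omega⟩ - q ⟨k + 2, by omega⟩).natAbs = 1)
    (hg : GoodF S c N n (swapSeq (k + 1) q)) : GoodF S c N n q := by
  rw [goodF_swap_iff S c N n (k + 1) (by omega) (by omega)] at hg
  rw [goodF_iff]
  intro i
  have h1 := S.adj (k + 1) h q _ hq' (hg i)
  rw [sw_sw] at h1
  have hs := swapSeq_same k (by omega) q hq
  have h2 : sw k (by omega) (((X ^ N * Qp (c - 1) n q) %ₘ Qp c n q).coeff i) =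
      ((X ^ N * Qp (c - 1) n q) %ₘ Qp c n q).coeff i := by
    rw [← coeff_map, map_modByMonic _ (Qp_monic _ _ _), Polynomial.map_mul,
      ← Qp_swap _ _ _ _ (by omega), ← Qp_swap _ _ _ _ (by omega), hs]
    simp
  have h3 := S.same k (by omega) q _
    (-(((X ^ N * Qp (c - 1) n q) %ₘ Qp c n q).coeff i)) hq h1 (by
      rw [map_mul, map_sub, h2, sw_X_right, sw_X_other _ _ _ (by simp; try omega) (by simp; try omega)]
      ring)
  simpa using h3

lemma free_pow (i : ℕ) : ∀ (h : i < m) (q : Fin m → ℤ),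
    (∀ j (hj : j < i), 2 ≤ (q ⟨j, hj.trans h⟩ - q ⟨i, h⟩).natAbs) →
    MvPolynomial.X ⟨i, h⟩ ^ Λ (q ⟨i, h⟩) ∈ S.I q := by
  induction i with
  | zero => intro h q _; exact S.cyc h q
  | succ i ih =>
    intro h q hq
    have h1 := ih (by omega) (swapSeq i q) (by
      intro j hj
      rw [swapSeq_left i h, swapSeq_other _ _ _ (by simp; omega) (by simp; omega)]
      exact hq j (by omega))
    have h2 := S.far i h q _ (hq i (by omega)) h1
    rwa [map_pow, sw_X_left, swapSeq_left i h] at h2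

lemma chain_pow (c : ℤ) (n : ℕ) (q : Fin m → ℤ)
    (hq : ∀ i (h : i < m), i ≤ n → q ⟨i, h⟩ = c + n - i) (i : ℕ) : ∀ (h : i < m), i ≤ n →
    MvPolynomial.X ⟨i, h⟩ ^ (∑ j ∈ Finset.range (i + 1), Λ (c + n - j)) ∈ S.I q := by
  induction i with
  | zero =>
    intro h hi
    have := S.cyc h q
    rw [hq 0 h hi] at this
    simpa using this
  | succ i ih =>
    intro h hi
    have h1 := ih (by omega) (by omega)
    have h2 := free_pow S i (by omega) (swapSeq i q) (by
      intro j hj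
      rw [swapSeq_left i h, swapSeq_other _ _ _ (by simp; omega) (by simp; omega),
        hq _ _ hi, hq _ _ (by omega)]
      push_cast; omega)
    have h3 := S.adj i h q _ (by rw [hq _ _ hi, hq _ _ (by omega)]; push_cast; omega) h2
    rw [map_pow, sw_X_left, swapSeq_left i h, hq _ _ hi] at h3
    rw [Finset.sum_range_succ, pow_add]
    set M := ∑ j ∈ Finset.range (i + 1), Λ (c + n - j)
    set y : MvPolynomial (Fin m) ℤ := MvPolynomial.X ⟨i, Nat.lt_of_succ_lt h⟩
    set y' : MvPolynomial (Fin m) ℤ := MvPolynomial.X ⟨i + 1, h⟩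
    obtain ⟨t, ht⟩ := sub_dvd_pow_sub_pow y y' M
    have : y' ^ M * y' ^ Λ (c + n - (i + 1 : ℕ)) =
        y' ^ Λ (c + n - (i + 1 : ℕ)) * y ^ M -
          t * ((y - y') * y' ^ Λ (c + n - (i + 1 : ℕ))) := by
      linear_combination (- y' ^ Λ (c + n - (i + 1 : ℕ))) * ht
    rw [this]
    exact Ideal.sub_mem _ (Ideal.mul_mem_left _ _ h1) (Ideal.mul_mem_left _ _ h3)

end sys

section thmC
open Polynomial
variable {m : ℕ} {Λ : ℤ → ℕ} (S : AnnSys m Λ)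

/-- The first `l.length` entries of `q` are those of `l`. -/
def Pre (q : Fin m → ℤ) (l : List ℤ) : Prop :=
  ∀ j : Fin m, j.val < l.length → q j = l.getD j.val 0

lemma getD_app (u w : List ℤ) (i : ℕ) : (u ++ w).getD (u.length + i) 0 = w.getD i 0 := by
  rw [List.getD_append_right _ _ _ _ (by omega)]; simp

lemma pre_at {q : Fin m → ℤ} {u w : List ℤ} (h : Pre q (u ++ w)) (i : ℕ)
    (hi : u.length + i < m) (hw : i < w.length) : q ⟨u.length + i, hi⟩ = w.getD i 0 := by
  have := h ⟨u.length + i, hi⟩ (by simp; omega)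
  rwa [getD_app] at this

lemma pre_swap {q : Fin m → ℤ} {u v : List ℤ} {a b : ℤ} (h : Pre q (u ++ a :: b :: v))
    (hm : u.length + 1 < m) : Pre (swapSeq u.length q) (u ++ b :: a :: v) := by
  intro j hj
  by_cases h1 : j.val = u.length
  · have : j = ⟨u.length, Nat.lt_of_succ_lt hm⟩ := Fin.ext h1
    rw [this, swapSeq_left _ hm, pre_at h 1 hm (by simp)]
    simp
  by_cases h2 : j.val = u.length + 1
  · have : j = ⟨u.length + 1, hm⟩ := Fin.ext h2
    rw [this, swapSeq_right _ hm]
    have h3 := pre_at h 0 (by omega) (by simp)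
    simp only [add_zero] at h3
    rw [h3]
    simp
  rw [swapSeq_other _ _ _ h1 h2, h j (by simpa using hj)]
  by_cases h3 : j.val < u.length
  · rw [List.getD_append _ _ _ _ h3, List.getD_append _ _ _ _ h3]
  · obtain ⟨i, hi⟩ := Nat.exists_eq_add_of_le (show u.length + 2 ≤ j.val by omega)
    rw [hi, show u.length + 2 + i = u.length + (i + 2) by omega, getD_app, getD_app]
    simp

lemma desc_length (c : ℤ) (k : ℕ) : (desc c k).length = k + 1 := by
  induction k with
  | zero => simp [desc]
  | succ k ih => simp [desc, ih]

lemma desc_getD (c : ℤ) (k : ℕ) : ∀ i ≤ k, (desc c k).getD i 0 = c + k - i := by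
  induction k with
  | zero => intro i hi; interval_cases i; simp [desc]
  | succ k ih =>
    intro i hi
    cases i with
    | zero => simp [desc]
    | succ i => rw [desc, List.getD_cons_succ, ih i (by omega)]; push_cast; ring

lemma goodF_B1 (c : ℤ) (N n : ℕ) (h : n < m) (q : Fin m → ℤ) (hc : q ⟨n, h⟩ ≠ c)
    (hg : GoodF S c N n q) : GoodF S c N (n + 1) q := by
  unfold GoodF DivMod at *
  rw [Qp_succ_ne c n h q hc]
  by_cases h1 : q ⟨n, h⟩ = c - 1
  · rw [Qp_succ_eq _ n h q h1, ← mul_assoc, Polynomial.map_mul]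
    exact Dvd.dvd.mul_right hg _
  · rwa [Qp_succ_ne _ n h q h1]

lemma goodF_B2 (c : ℤ) (N p : ℕ) (h : p + 1 < m) (q : Fin m → ℤ)
    (hc : q ⟨p, Nat.lt_of_succ_lt h⟩ = c) (hc' : q ⟨p + 1, h⟩ = c)
    (hg : GoodF S c N (p + 1) q) : GoodF S c N (p + 1 + 1) q := by
  unfold GoodF at *
  rw [Qp_succ_eq c _ h q hc', Qp_succ_eq c _ _ q hc, Qp_succ_ne (c - 1) _ h q (by omega),
    Qp_succ_ne (c - 1) _ _ q (by rw [hc]; omega)]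
  rw [Qp_succ_eq c _ _ q hc,
    Qp_succ_ne (c - 1) _ _ q (by rw [hc]; omega)] at hg
  apply div_same S p h q (by rw [hc, hc']) _ _ (Qp_monic _ _ _)
    (Qp_map_ge _ _ _ _ le_rfl _) _ hg
  rw [Polynomial.map_mul, Qp_map_ge _ _ _ _ le_rfl _]
  simp

lemma goodF_B2' (c : ℤ) (N p : ℕ) (h : p + 1 < m) (q : Fin m → ℤ)
    (hc : q ⟨p, Nat.lt_of_succ_lt h⟩ = c - 1) (hc' : q ⟨p + 1, h⟩ = c)
    (hg : GoodF S c N p q) (hg' : GoodF S c N (p + 1) (swapSeq p q)) :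
    GoodF S c N (p + 1 + 1) q := by
  unfold GoodF at *
  rw [Qp_succ_eq c _ h q hc', Qp_succ_ne c _ _ q (by rw [hc]; omega),
    Qp_succ_ne (c - 1) _ h q (by omega), Qp_succ_eq (c - 1) _ _ q hc]
  rw [Qp_succ_eq c _ (Nat.lt_of_succ_lt h) _ (by rw [swapSeq_left _ h, hc']),
    Qp_succ_ne (c - 1) _ (Nat.lt_of_succ_lt h) _ (by rw [swapSeq_left _ h, hc']; omega),
    Qp_swap_ge _ _ _ le_rfl, Qp_swap_ge _ _ _ le_rfl] at hg'
  have hm := Qp_monic c p q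
  have h1 := divMod_map_eq hm hg
  have h2 := divMod_eval hm hg'
  set A := Qp c p q with hA
  set B := X ^ N * Qp (c - 1) p q with hB
  have sA : A.map (sw p h) = A := Qp_map_ge _ _ _ _ le_rfl _
  have sB : B.map (sw p h) = B := by
    rw [hB, Polynomial.map_mul, Qp_map_ge _ _ _ _ le_rfl _]; simp
  have sH : (B /ₘ A).map (sw p h) = B /ₘ A := by
    rw [map_divByMonic _ hm, sA, sB]
  set H := B /ₘ A with hH
  have h3 := S.adj p h q _ (by rw [hc, hc']; omega) h2
  rw [← Polynomial.eval_map_apply, sH, sw_X_left] at h3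
  set y : MvPolynomial (Fin m) ℤ := MvPolynomial.X ⟨p, Nat.lt_of_succ_lt h⟩ with hy
  set y' : MvPolynomial (Fin m) ℤ := MvPolynomial.X ⟨p + 1, h⟩ with hy'
  have h4 : ((X - C y) * H).eval y' ∈ S.I q := by
    have : ((X - C y) * H).eval y' = - ((y - y') * H.eval y') := by simp; ring
    rw [this]
    exact neg_mem h3
  have h5 := map_eq_of_eval h4
  unfold DivMod
  rw [← mul_assoc, ← hB]
  refine ⟨((X - C y) * H /ₘ (X - C y')).map (Ideal.Quotient.mk (S.I q)), ?_⟩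
  simp only [Polynomial.map_mul] at h5 ⊢
  linear_combination ((X - C y).map (Ideal.Quotient.mk (S.I q))) * h1 +
    (A.map (Ideal.Quotient.mk (S.I q))) * h5

lemma goodF_B3 (c : ℤ) (N n : ℕ) (h : n < m) (q : Fin m → ℤ)
    (hq : ∀ i (h : i < m), i ≤ n → q ⟨i, h⟩ = c + n - i)
    (hN : ∑ i ∈ Finset.range (n + 1), Λ (c + i) ≤ N) : GoodF S c N (n + 1) q := by
  have hp := chain_pow S c n q hq n h le_rfl
  have hsum : ∑ j ∈ Finset.range (n + 1), Λ (c + n - j) =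
      ∑ i ∈ Finset.range (n + 1), Λ (c + i) := by
    rw [← Finset.sum_range_reflect]
    apply Finset.sum_congr rfl
    intro j hj
    rw [Finset.mem_range] at hj
    congr 1
    have : ((n + 1 - 1 - j : ℕ) : ℤ) = n - j := by omega
    rw [this]; ring
  rw [hsum] at hp
  have hp2 : MvPolynomial.X ⟨n, h⟩ ^ N ∈ S.I q := by
    rw [← Nat.sub_add_cancel hN, pow_add]
    exact Ideal.mul_mem_left _ _ hp
  have e1 : Qp c n q = 1 := by
    unfold Qp
    apply Finset.prod_eq_one
    intro j hj
    simp only [Finset.mem_filter, Finset.mem_univ, true_and] at hj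
    have := hq j.val j.isLt (by omega)
    simp only [Fin.eta] at this
    omega
  have e2 : Qp (c - 1) (n + 1) q = 1 := by
    unfold Qp
    apply Finset.prod_eq_one
    intro j hj
    simp only [Finset.mem_filter, Finset.mem_univ, true_and] at hj
    have := hq j.val j.isLt (by omega)
    simp only [Fin.eta] at this
    omega
  unfold GoodF DivMod
  rw [Qp_succ_eq c n h q (by rw [hq n h le_rfl]; ring), e1, e2, one_mul, mul_one]
  rw [map_eq_of_eval (H := (X ^ N : (MvPolynomial (Fin m) ℤ)[X]))
    (y := MvPolynomial.X ⟨n, h⟩) (by simpa using hp2)]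
  exact dvd_mul_right _ _

theorem thmC (T : Set ℤ) (c : ℤ) (N : ℕ)
    (hN : ∀ k : ℕ, (∀ i ≤ k, c + (i : ℤ) ∈ T) → ∑ i ∈ Finset.range (k + 1), Λ (c + i) ≤ N)
    (n : ℕ) : n ≤ m → ∀ q : Fin m → ℤ, (∀ j : Fin m, j.val < n → q j ∈ T) →
      GoodF S c N n q := by
  induction n using Nat.strong_induction_on with
  | _ n ih =>
  intro hn q hq
  by_cases hn0 : n = 0
  · subst hn0
    unfold GoodF DivMod
    rw [Qp_zero]; simp
  have key : ∀ w : List ℤ, w.length = n → (∀ a ∈ w, a ∈ T) → ∀ q : Fin m → ℤ, Pre q w →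
      GoodF S c N n q := by
    have preT : ∀ (w : List ℤ) (q : Fin m → ℤ), Pre q w → (∀ a ∈ w, a ∈ T) →
        ∀ j : Fin m, j.val < w.length → q j ∈ T := by
      intro w q hp hT j hj
      rw [hp j hj, List.getD_eq_getElem _ _ hj]
      exact hT _ (List.getElem_mem _)
    refine G_all (c := c) ?_ ?_ ?_ ?_ ?_ ?_ ?_ ?_
    · intro u a b v hab hG hl hT q hp
      simp only [List.length_append, List.length_cons] at hl
      have hm : u.length + 1 < m := by omega
      have h0 := pre_at hp 0 (by omega) (by simp)
      have h1 := pre_at hp 1 (by omega) (by simp)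
      simp at h0 h1
      apply good_far S c N n u.length hm (by omega) q (by rw [h0, h1]; exact hab)
      apply hG (by simp; omega) _ _ (pre_swap hp hm)
      intro x hx
      apply hT
      simp at hx ⊢
      tauto
    · intro u i j v hij hG1 hG2 hl hT q hp
      simp only [List.length_append, List.length_cons] at hl
      have hm : u.length + 1 < m := by omega
      have h0 := pre_at hp 0 (by omega) (by simp)
      have h1 := pre_at hp 1 (by omega) (by simp)
      have h2 := pre_at hp 2 (by omega) (by simp)
      simp at h0 h1 h2
      apply good_braid S c N n u.length (by omega) (by omega) q (by rw [h0, h2])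
        (by rw [h0, h1]; exact hij)
      · apply hG2 (by simp; omega) _ _ (pre_swap hp hm)
        intro x hx
        apply hT
        simp at hx ⊢
        tauto
      · have hp' : Pre q ((u ++ [i]) ++ j :: i :: v) := by simpa using hp
        have := pre_swap hp' (by simp; omega)
        apply hG1 (by simp; omega) _ _ (by simpa using this)
        intro x hx
        apply hT
        simp at hx ⊢
        tauto
    · intro u i j v hij hG hl hT q hp
      simp only [List.length_append, List.length_cons] at hl
      have hm : u.length + 1 < m := by omega
      have h0 := pre_at hp 0 (by omega) (by simp)
      have h1 := pre_at hp 1 (by omega) (by simp)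
      have h2 := pre_at hp 2 (by omega) (by simp)
      simp at h0 h1 h2
      apply good_stack S c N n u.length (by omega) (by omega) q (by rw [h0, h1])
        (by rw [h1, h2]; exact hij)
      have hp' : Pre q ((u ++ [i]) ++ i :: j :: v) := by simpa using hp
      have := pre_swap hp' (by simp; omega)
      apply hG (by simp; omega) _ _ (by simpa using this)
      intro x hx
      apply hT
      simp at hx ⊢
      tauto
    · intro hl
      simp at hl; omega
    · intro u a hac hl hT q hp
      simp only [List.length_append, List.length_cons, List.length_nil] at hl
      obtain ⟨p, rfl⟩ : ∃ p, n = p + 1 := ⟨n - 1, by omega⟩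
      have hup : u.length = p := by omega
      subst hup
      have h0 := pre_at hp 0 (by omega) (by simp)
      simp at h0
      apply goodF_B1 S c N _ (by omega) q (by rw [h0]; exact hac)
      apply ih _ (by omega) (by omega)
      intro j hj
      exact preT _ _ hp hT j (by simp; omega)
    · intro u hl hT q hp
      simp only [List.length_append, List.length_cons, List.length_nil] at hl
      obtain ⟨p, rfl⟩ : ∃ p, n = p + 1 + 1 := ⟨n - 2, by omega⟩
      have hup : u.length = p := by omega
      subst hup
      have h0 := pre_at hp 0 (by omega) (by simp)
      have h1 := pre_at hp 1 (by omega) (by simp)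
      simp at h0 h1
      apply goodF_B2 S c N _ (by omega) q h0 h1
      apply ih _ (by omega) (by omega)
      intro j hj
      exact preT _ _ hp hT j (by simp; omega)
    · intro u hl hT q hp
      simp only [List.length_append, List.length_cons, List.length_nil] at hl
      obtain ⟨p, rfl⟩ : ∃ p, n = p + 1 + 1 := ⟨n - 2, by omega⟩
      have hup : u.length = p := by omega
      subst hup
      have h0 := pre_at hp 0 (by omega) (by simp)
      have h1 := pre_at hp 1 (by omega) (by simp)
      simp at h0 h1
      apply goodF_B2' S c N _ (by omega) q h0 h1
      · apply ih _ (by omega) (by omega)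
        intro j hj
        exact preT _ _ hp hT j (by simp; omega)
      · apply ih _ (by omega) (by omega)
        intro j hj
        refine preT _ _ (pre_swap hp (by omega)) ?_ j (by simp; omega)
        intro x hx
        apply hT
        simp at hx ⊢
        tauto
    · intro k hl hT q hp
      rw [desc_length] at hl
      subst hl
      have hq' : ∀ i (h : i < m), i ≤ k → q ⟨i, h⟩ = c + k - i := by
        intro i hi hik
        rw [hp ⟨i, hi⟩ (by rw [desc_length]; simp; try omega), desc_getD c k i hik]
      apply goodF_B3 S c N k (by omega) q hq'
      apply hN
      intro i hik
      have := preT _ _ hp hT ⟨k - i, by omega⟩ (by rw [desc_length]; simp; try omega)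
      rw [hq' _ _ (by omega)] at this
      have e : c + (k : ℤ) - ((k - i : ℕ) : ℤ) = c + i := by omega
      rwa [e] at this
  refine key (List.ofFn fun i : Fin n => q ⟨i.val, by omega⟩) (by simp) ?_ q ?_
  · intro a ha
    rw [List.mem_ofFn] at ha
    obtain ⟨i, rfl⟩ := ha
    exact hq _ i.isLt
  · intro j hj
    rw [List.getD_eq_getElem _ _ hj]
    simp

end thmC

section final
open Polynomial
variable {m : ℕ} {Λ : ℤ → ℕ} (S : AnnSys m Λ)

lemma swapSeq_neg (k : ℕ) (q : Fin m → ℤ) :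
    (fun j => - swapSeq k q j) = swapSeq k (fun j => - q j) := by
  funext j
  unfold swapSeq
  split_ifs <;> rfl

/-- The system obtained by the diagram automorphism `a ↦ -a`. -/
def AnnSys.mirror : AnnSys m (fun a => Λ (-a)) where
  I q := S.I (fun j => - q j)
  far k h q f h1 h2 := by
    rw [swapSeq_neg] at h2
    exact S.far k h _ f (by omega) h2
  adj k h q f h1 h2 := by
    rw [swapSeq_neg] at h2
    exact S.adj k h _ f (by omega) h2
  same k h q f g h1 h2 h3 := S.same k h _ f g (by rw [h1]) h2 h3
  braid k h q f h1 h2 h3 h4 := by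
    rw [swapSeq_neg] at h3 h4
    exact S.braid k h _ f (by rw [h1]) (by omega) h3 h4
  cyc h q := S.cyc h _

lemma Qp_neg (c : ℤ) (n : ℕ) (q : Fin m → ℤ) : Qp c n (fun j => - q j) = Qp (-c) n q := by
  unfold Qp
  congr 1
  ext j
  simp only [Finset.mem_filter, Finset.mem_univ, true_and]
  constructor <;> rintro ⟨h1, h2⟩ <;> exact ⟨h1, by omega⟩

theorem thmC_mirror (T : Set ℤ) (c : ℤ) (N : ℕ)
    (hN : ∀ k : ℕ, (∀ i ≤ k, c - 1 - (i : ℤ) ∈ T) →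
      ∑ i ∈ Finset.range (k + 1), Λ (c - 1 - i) ≤ N)
    (n : ℕ) (hn : n ≤ m) (q : Fin m → ℤ) (hq : ∀ j : Fin m, j.val < n → q j ∈ T) :
    DivMod (S.I q) (Qp (c - 1) n q) (X ^ N * Qp c n q) := by
  have := thmC S.mirror {t | -t ∈ T} (1 - c) N (by
    intro k hk
    have e : ∀ i : ℕ, -(1 - c + (i : ℤ)) = c - 1 - i := fun i => by ring
    simp only [Set.mem_ofPred_eq, e] at hk
    simp only [e]
    exact hN k hk) n hn (fun j => - q j) (by
      intro j hj
      simpa using hq j hj)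
  unfold GoodF at this
  rw [Qp_neg, Qp_neg] at this
  have e1 : S.mirror.I (fun j => - q j) = S.I q := by
    simp [AnnSys.mirror]
  rw [e1] at this
  convert this using 2
  · ring
  · congr 1; ring

theorem nil_full (T : Finset ℤ) (q : Fin m → ℤ) (r : Fin m) (hq : ∀ j ≤ r, q j ∈ T) :
    MvPolynomial.X r ^ (∑ t ∈ T, Λ t) ∈ S.I q := by
  classical
  have h1 := thmC S (T : Set ℤ) (q r) (∑ t ∈ T.filter (fun t => q r ≤ t), Λ t) (by
    intro k hk
    rw [← Finset.sum_image (s := Finset.range (k + 1)) (g := fun i : ℕ => q r + (i : ℤ))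
      (f := Λ) (by intro a _ b _ h; simpa using h)]
    apply Finset.sum_le_sum_of_subset
    intro t ht
    simp only [Finset.mem_image, Finset.mem_range] at ht
    obtain ⟨i, hi, rfl⟩ := ht
    simp only [Finset.mem_filter]
    exact ⟨hk i (by omega), by omega⟩) (r.val + 1) (by omega) q (by
      intro j hj
      exact hq j (Fin.le_def.2 (by omega)))
  have h2 := thmC_mirror S (T : Set ℤ) (q r) (∑ t ∈ T.filter (fun t => ¬ q r ≤ t), Λ t) (by
    intro k hk
    rw [← Finset.sum_image (s := Finset.range (k + 1)) (g := fun i : ℕ => q r - 1 - (i : ℤ))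
      (f := Λ) (by intro a _ b _ h; simpa using h)]
    apply Finset.sum_le_sum_of_subset
    intro t ht
    simp only [Finset.mem_image, Finset.mem_range] at ht
    obtain ⟨i, hi, rfl⟩ := ht
    simp only [Finset.mem_filter]
    exact ⟨hk i (by omega), by omega⟩) r.val (by omega) q (by
      intro j hj
      exact hq j (Fin.le_def.2 (by omega)))
  rw [← Finset.sum_filter_add_sum_filter_not T (fun t => q r ≤ t)]
  set N1 := ∑ t ∈ T.filter (fun t => q r ≤ t), Λ t
  set N2 := ∑ t ∈ T.filter (fun t => ¬ q r ≤ t), Λ t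
  unfold GoodF at h1
  rw [Qp_succ_eq _ _ r.isLt q rfl, Qp_succ_ne _ _ r.isLt q (by simp; try omega)] at h1
  have hm := (Qp_monic (q r) r.val q).map (Ideal.Quotient.mk (S.I q))
  have h3 : DivMod (S.I q) (Qp (q r) r.val q * (X - C (MvPolynomial.X r)))
      (Qp (q r) r.val q * X ^ (N1 + N2)) := by
    unfold DivMod at *
    obtain ⟨F, hF⟩ := h1
    obtain ⟨G, hG⟩ := h2
    simp only [Polynomial.map_mul, Polynomial.map_pow, map_X] at *
    refine ⟨F * G, ?_⟩
    rw [pow_add]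
    linear_combination (X ^ N1) * hG + G * hF
  have h4 : DivMod (S.I q) (X - C (MvPolynomial.X r)) (X ^ (N1 + N2)) := by
    unfold DivMod at *
    rw [Polynomial.map_mul, Polynomial.map_mul] at h3
    obtain ⟨F, hF⟩ := h3
    rw [mul_assoc] at hF
    exact ⟨F, hm.isRegular.left hF⟩
  have h5 := divMod_eval (I := S.I q) (A := 1) (B := X ^ (N1 + N2)) monic_one
    (y := MvPolynomial.X r) (by rwa [one_mul])
  simpa using h5

lemma swap_val (k : ℕ) (h : k + 1 < m) (j : Fin m) :
    (Equiv.swap (⟨k, Nat.lt_of_succ_lt h⟩ : Fin m) ⟨k + 1, h⟩ j).val =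
      if j.val = k then k + 1 else if j.val = k + 1 then k else j.val := by
  rw [Equiv.swap_apply_def]
  simp only [Fin.ext_iff]
  split_ifs <;> simp_all

lemma mem_image_swap (a b : Fin m) (U : Finset (Fin m)) (x : Fin m) :
    x ∈ U.image (Equiv.swap a b) ↔ Equiv.swap a b x ∈ U := by
  rw [Finset.mem_image]
  constructor
  · rintro ⟨y, hy, rfl⟩
    rwa [Equiv.swap_apply_self]
  · intro hx
    exact ⟨_, hx, Equiv.swap_apply_self _ _ _⟩

lemma sum_image_swap_lt (k : ℕ) (h : k + 1 < m) (U : Finset (Fin m))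
    (h1 : (⟨k, Nat.lt_of_succ_lt h⟩ : Fin m) ∉ U) (h2 : (⟨k + 1, h⟩ : Fin m) ∈ U) :
    ∑ x ∈ U.image (Equiv.swap (⟨k, Nat.lt_of_succ_lt h⟩ : Fin m) ⟨k + 1, h⟩), x.val <
      ∑ x ∈ U, x.val := by
  rw [Finset.sum_image (by intro a _ b _ hab; exact (Equiv.injective _) hab)]
  apply Finset.sum_lt_sum
  · intro x hx
    rw [swap_val k h]
    have : x.val ≠ k := by
      intro hk
      apply h1
      have : x = ⟨k, Nat.lt_of_succ_lt h⟩ := Fin.ext hk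
      rwa [← this]
    split_ifs <;> omega
  · exact ⟨_, h2, by rw [swap_val k h]; simp⟩

lemma not_mem_ne {k : ℕ} {h : k < m} {U : Finset (Fin m)} (h1 : (⟨k, h⟩ : Fin m) ∉ U)
    {x : Fin m} (hx : x ∈ U) : x.val ≠ k := by
  intro hk
  apply h1
  have : x = ⟨k, h⟩ := Fin.ext hk
  rwa [← this]

theorem nil_trapped (s : ℕ) : ∀ (q : Fin m → ℤ) (r : Fin m) (U : Finset (Fin m)),
    ∑ x ∈ U, x.val = s → r ∈ U → (∀ k ∈ U, k ≤ r) →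
    (∀ k ∈ U, ∀ j < k, (q j - q k).natAbs ≤ 1 → j ∈ U) →
    MvPolynomial.X r ^ (∑ t ∈ U.image q, Λ t) ∈ S.I q := by
  induction s using Nat.strong_induction_on with
  | _ s ih =>
  intro q r U hs hr hle hcl
  by_cases hgap : ∃ (k : ℕ) (h : k + 1 < m), (⟨k, Nat.lt_of_succ_lt h⟩ : Fin m) ∉ U ∧
      (⟨k + 1, h⟩ : Fin m) ∈ U
  · obtain ⟨k, h, hk1, hk2⟩ := hgap
    set σ := Equiv.swap (⟨k, Nat.lt_of_succ_lt h⟩ : Fin m) ⟨k + 1, h⟩ with hσ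
    have hfar : 2 ≤ (q ⟨k, Nat.lt_of_succ_lt h⟩ - q ⟨k + 1, h⟩).natAbs := by
      by_contra hcon
      exact hk1 (hcl _ hk2 _ (Fin.lt_def.2 (by simp)) (by omega))
    have hσσ : ∀ x, σ (σ x) = x := fun x => Equiv.swap_apply_self _ _ _
    have hrk := Fin.le_def.1 (hle _ hk2)
    simp only at hrk
    have h1 := ih _ (by rw [← hs]; exact sum_image_swap_lt k h U hk1 hk2)
      (swapSeq k q) (σ r) (U.image σ) rfl (by rw [mem_image_swap, hσσ]; exact hr) (by
        intro x hx
        rw [mem_image_swap] at hx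
        have hx1 := Fin.le_def.1 (hle _ hx)
        have hx2 := not_mem_ne hk1 hx
        rw [swap_val k h] at hx1 hx2
        rw [Fin.le_def, hσ, swap_val k h]
        split_ifs at * <;> omega) (by
        intro x hx j hj hn
        rw [mem_image_swap] at hx ⊢
        rw [swapSeq_apply k h, swapSeq_apply k h] at hn
        refine hcl _ hx _ ?_ hn
        have hx2 := not_mem_ne hk1 hx
        rw [swap_val k h] at hx2
        rw [Fin.lt_def] at hj
        rw [Fin.lt_def, swap_val k h, swap_val k h]
        split_ifs at * <;> omega)
    have h2 := S.far k h q _ hfar h1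
    rw [map_pow, sw_X, ← hσ, hσσ] at h2
    have e : (U.image σ).image (swapSeq k q) = U.image q := by
      rw [Finset.image_image]
      congr 1
      funext x
      simp only [Function.comp]
      rw [swapSeq_apply k h, ← hσ, hσσ]
    rwa [e] at h2
  · push Not at hgap
    have hdown : ∀ d : ℕ, ∀ (h : r.val - d < m), (⟨r.val - d, h⟩ : Fin m) ∈ U := by
      intro d
      induction d with
      | zero => intro h; simpa using hr
      | succ d ihd =>
        intro h
        by_contra hcon
        by_cases hd : r.val - d = 0
        · have := ihd (by omega)
          simp only [hd, show r.val - (d + 1) = 0 by omega] at this hcon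
          exact hcon this
        · have e : r.val - (d + 1) + 1 = r.val - d := by omega
          apply hgap (r.val - (d + 1)) (by omega) hcon
          simp only [e]
          exact ihd _
    apply nil_full
    intro j hj
    apply Finset.mem_image_of_mem
    have := hdown (r.val - j.val) (by omega)
    have e : r.val - (r.val - j.val) = j.val := by
      have := Fin.le_def.1 hj; omega
    simpa only [e] using this

theorem nil_agBound {Λ : ℤ →₀ ℕ} (S : AnnSys m Λ) (q : Fin m → ℤ) (r : Fin m) :
    MvPolynomial.X r ^ agBound Λ (List.ofFn q) r.val ∈ S.I q := by
  classical
  have hget : ∀ j : Fin m, (List.ofFn q).getD j.val 0 = q j := by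
    intro j
    rw [List.getD_eq_getElem _ _ (by simp)]
    simp
  set U : Finset (Fin m) := Finset.univ.filter fun j => Trapped (List.ofFn q) r.val j.val
  have hle : ∀ a b, Trapped (List.ofFn q) b a → a ≤ b := by
    intro a b hab
    unfold Trapped at hab
    induction hab with
    | refl => exact le_rfl
    | tail _ h ih => exact ih.trans h.1.le
  have h1 := nil_trapped S _ q r U rfl (by
    simp only [U, Finset.mem_filter, Finset.mem_univ, true_and]
    exact Relation.ReflTransGen.refl) (by
    intro k hk
    simp only [U, Finset.mem_filter, Finset.mem_univ, true_and] at hk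
    exact Fin.le_def.2 (hle _ _ hk)) (by
    intro k hk j hj hn
    simp only [U, Finset.mem_filter, Finset.mem_univ, true_and] at hk ⊢
    refine Relation.ReflTransGen.head ⟨Fin.lt_def.1 hj, by simp, ?_⟩ hk
    rw [hget, hget]
    exact hn)
  have h2 : ∑ t ∈ U.image q, Λ t ≤ agBound Λ (List.ofFn q) r.val := by
    unfold agBound
    apply Finset.sum_le_sum_of_subset
    intro t ht
    rw [Finset.mem_image] at ht
    obtain ⟨j, hj, rfl⟩ := ht
    simp only [U, Finset.mem_filter, Finset.mem_univ, true_and] at hj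
    unfold trappedRunners
    rw [Finset.mem_image]
    refine ⟨j.val, ?_, hget j⟩
    simp only [Finset.mem_filter, Finset.mem_range, List.length_ofFn]
    exact ⟨j.isLt, hj⟩
  rw [← Nat.sub_add_cancel h2, pow_add]
  exact Ideal.mul_mem_left _ _ h1

lemma stack_dvd (q : Fin m → ℤ) (r : Fin m) (b : ℕ) (hb : MvPolynomial.X r ^ b ∈ S.I q)
    (j : ℕ) : ∀ (hj : r.val + j < m), (∀ x : Fin m, r ≤ x → x.val ≤ r.val + j → q x = q r) →
    ∃ A : (MvPolynomial (Fin m) ℤ)[X], A.Monic ∧ A.natDegree = j ∧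
      (∀ k (h : k + 1 < m), r.val + j ≤ k → A.map (sw k h) = A) ∧
      DivMod (S.I q) (A * (X - C (MvPolynomial.X ⟨r.val + j, hj⟩))) (X ^ b) := by
  induction j with
  | zero =>
    intro hj _
    refine ⟨1, monic_one, natDegree_one, fun k h _ => by simp, ?_⟩
    rw [one_mul]
    unfold DivMod
    rw [map_eq_of_eval (H := (X ^ b : (MvPolynomial (Fin m) ℤ)[X]))
      (y := MvPolynomial.X r) (by simpa using hb)]
    exact dvd_mul_right _ _
  | succ j ih =>
    intro hj hq
    obtain ⟨A, hA, hdeg, hinv, hdv⟩ := ih (by omega) (fun x h1 h2 => hq x h1 (by omega))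
    refine ⟨A * (X - C (MvPolynomial.X ⟨r.val + j, by omega⟩)), hA.mul (monic_X_sub_C _),
      ?_, ?_, ?_⟩
    · rw [hA.natDegree_mul (monic_X_sub_C _), hdeg, natDegree_X_sub_C]
    · intro k h hk
      rw [Polynomial.map_mul, hinv k h (by omega)]
      simp only [Polynomial.map_sub, map_X, map_C]
      rw [sw_X_other _ _ _ (by simp; omega) (by simp; omega)]
    · exact div_same S (r.val + j) hj q
        ((hq ⟨r.val + j, by omega⟩ (Fin.le_def.2 (by simp)) (by simp)).trans
          (hq ⟨r.val + j + 1, hj⟩ (Fin.le_def.2 (by simp; omega)) (by simp; try omega)).symm)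
        A _ hA (hinv _ _ le_rfl) (by simp) hdv

lemma stack_one (q : Fin m → ℤ) (r : Fin m) (b : ℕ) (hb : MvPolynomial.X r ^ b ∈ S.I q)
    (hj : r.val + b < m) (hq : ∀ x : Fin m, r ≤ x → x.val ≤ r.val + b → q x = q r) :
    (1 : MvPolynomial (Fin m) ℤ) ∈ S.I q := by
  obtain ⟨A, hA, hdeg, -, hdv⟩ := stack_dvd S q r b hb b hj hq
  by_contra hcon
  have hne : S.I q ≠ ⊤ := fun h => hcon (by rw [h]; trivial)
  have : Nontrivial (MvPolynomial (Fin m) ℤ ⧸ S.I q) := Ideal.Quotient.nontrivial_iff.2 hne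
  have hm := hA.mul (monic_X_sub_C (MvPolynomial.X (⟨r.val + b, hj⟩ : Fin m)))
  refine (hm.map (Ideal.Quotient.mk (S.I q))).not_dvd_of_natDegree_lt ?_ ?_ hdv
  · rw [Polynomial.map_pow, map_X]
    exact (monic_X_pow b).ne_zero
  · rw [hm.natDegree_map, Polynomial.map_pow, map_X, natDegree_X_pow,
      hA.natDegree_mul (monic_X_sub_C _), hdeg, natDegree_X_sub_C]
    omega

theorem stack_vanish (s : ℕ) : ∀ (q : Fin m → ℤ) (r : Fin m) (b : ℕ) (U : Finset (Fin m)),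
    ∑ x ∈ U, x.val = s → r ∈ U → (∀ k ∈ U, r ≤ k) → U.card = b + 1 →
    (∀ k ∈ U, q k = q r) →
    (∀ k : Fin m, r ≤ k → (∃ k' ∈ U, k ≤ k') → k ∈ U ∨ 2 ≤ (q k - q r).natAbs) →
    MvPolynomial.X r ^ b ∈ S.I q → (1 : MvPolynomial (Fin m) ℤ) ∈ S.I q := by
  induction s using Nat.strong_induction_on with
  | _ s ih =>
  intro q r b U hs hr hmin hcard hrun hcons hb
  by_cases hgap : ∃ (k : ℕ) (h : k + 1 < m), r.val ≤ k ∧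
      (⟨k, Nat.lt_of_succ_lt h⟩ : Fin m) ∉ U ∧ (⟨k + 1, h⟩ : Fin m) ∈ U
  · obtain ⟨k, h, hrk, hk1, hk2⟩ := hgap
    have hrk' : r.val < k := lt_of_le_of_ne hrk (not_mem_ne hk1 hr)
    set σ := Equiv.swap (⟨k, Nat.lt_of_succ_lt h⟩ : Fin m) ⟨k + 1, h⟩ with hσ
    have hσσ : ∀ x, σ (σ x) = x := fun x => Equiv.swap_apply_self _ _ _
    have hσr : σ r = r := by
      apply Fin.ext
      rw [hσ, swap_val k h]
      split_ifs <;> omega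
    have hq'r : swapSeq k q r = q r := by rw [swapSeq_apply k h, ← hσ, hσr]
    have hfar : 2 ≤ (q ⟨k, Nat.lt_of_succ_lt h⟩ - q ⟨k + 1, h⟩).natAbs := by
      rw [hrun _ hk2]
      exact (hcons _ (Fin.le_def.2 hrk) ⟨_, hk2, Fin.le_def.2 (by simp)⟩).resolve_left hk1
    have hb' : MvPolynomial.X r ^ b ∈ S.I (swapSeq k q) := by
      have := S.far k h (swapSeq k q) (MvPolynomial.X r ^ b)
        (by rw [swapSeq_left k h, swapSeq_right k h]; omega) (by rwa [swapSeq_swapSeq])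
      rwa [map_pow, sw_X, ← hσ, hσr] at this
    have h1 := ih _ (by rw [← hs]; exact sum_image_swap_lt k h U hk1 hk2)
      (swapSeq k q) r b (U.image σ) rfl (by rw [mem_image_swap, ← hσ, hσr]; exact hr) (by
        intro x hx
        rw [mem_image_swap] at hx
        have hx1 := Fin.le_def.1 (hmin _ hx)
        rw [swap_val k h] at hx1
        rw [Fin.le_def]
        split_ifs at * <;> omega) (by
        rw [Finset.card_image_of_injective _ σ.injective, hcard]) (by
        intro x hx
        rw [mem_image_swap] at hx
        rw [hq'r, swapSeq_apply k h]
        exact hrun _ hx) (by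
        rintro x hx ⟨y, hy, hxy⟩
        rw [mem_image_swap] at hy ⊢
        rw [hq'r, swapSeq_apply k h]
        rw [Fin.le_def] at hx hxy
        apply hcons
        · rw [Fin.le_def, swap_val k h]
          split_ifs at * <;> omega
        · by_cases hxk : x.val = k ∨ x.val = k + 1
          · refine ⟨_, hk2, ?_⟩
            rw [Fin.le_def, swap_val k h]
            simp only
            split_ifs at * <;> omega
          · refine ⟨_, hy, ?_⟩
            rw [Fin.le_def, swap_val k h, swap_val k h]
            split_ifs at * <;> omega) hb'
    have h2 := S.far k h q _ hfar h1
    rwa [map_one] at h2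
  · push Not at hgap
    obtain ⟨M, hM, hMmax⟩ := U.exists_max_image id ⟨r, hr⟩
    simp only [id] at hMmax
    have hdown : ∀ d : ℕ, ∀ (h : M.val - d < m), r.val ≤ M.val - d →
        (⟨M.val - d, h⟩ : Fin m) ∈ U := by
      intro d
      induction d with
      | zero => intro h _; simpa using hM
      | succ d ihd =>
        intro h hrd
        by_contra hcon
        by_cases hd : M.val - d = 0
        · have := ihd (by omega) (by omega)
          simp only [hd, show M.val - (d + 1) = 0 by omega] at this hcon
          exact hcon this
        · have e : M.val - (d + 1) + 1 = M.val - d := by omega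
          apply hgap (M.val - (d + 1)) (by omega) hrd hcon
          simp only [e]
          exact ihd _ (by omega)
    have hU : U = Finset.Icc r M := by
      ext x
      rw [Finset.mem_Icc]
      constructor
      · intro hx
        exact ⟨hmin _ hx, hMmax _ hx⟩
      · rintro ⟨hx1, hx2⟩
        rw [Fin.le_def] at hx1 hx2
        have e : M.val - (M.val - x.val) = x.val := by omega
        have := hdown (M.val - x.val) (by omega) (by omega)
        simpa only [e] using this
    have hrM := Fin.le_def.1 (hmin _ hM)
    have hMb : M.val = r.val + b := by
      rw [hU, Fin.card_Icc] at hcard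
      omega
    apply stack_one S q r b hb (by omega)
    intro x hx1 hx2
    apply hrun
    rw [hU, Finset.mem_Icc]
    exact ⟨hx1, Fin.le_def.2 (by omega)⟩

end final

/-- If for some term `i_r` of the sequence `i` the
configuration `conf(i)` contains `b_r + 1` beads stacked consecutively on the
runner `i_r` starting at position `r` (so the extra `b_r` beads lie above bead
`r`), where `b_r` is the `r`-antigravity bound, then `1_i = 0` in `R_ν^Λ`
(type `A_∞`). -/
theorem stacked_beads_above_anchor_idempotent_vanishes {m : ℕ} {A : Type}
    [Ring A] {Λ : ℤ →₀ ℕ} (K : CycKLR ℤ adjZ m A Λ) (q : Fin m → ℤ)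
    (r : Fin m) (S : Finset (Fin m)) (hrS : r ∈ S) (hmin : ∀ k ∈ S, r ≤ k)
    (hcard : S.card = agBound Λ (List.ofFn q) r.val + 1)
    (hrun : ∀ k ∈ S, q k = q r)
    (hconsec : ∀ k : Fin m, r ≤ k → (∃ k' ∈ S, k ≤ k') →
      k ∈ S ∨ 2 ≤ (q k - q r).natAbs) :
    K.e q = 0 := by
  have h := stack_vanish (annSys K) _ q r _ S rfl hrS hmin hcard hrun hconsec
    (nil_agBound (annSys K) q r)
  have h1 : (1 : MvPolynomial (Fin m) ℤ) ∈ annI K q := h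
  rw [mem_annI, map_one, one_mul] at h1
  exact h1

end KLRPaper
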